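/- arXiv:2012.09871 — 2 statements merged into one kernel-verified Lean document; each statement's English description precedes it below -/
import Mathlib

section
/- Let (M², g) be a complete Riemannian surface homeomorphic to ℝ², and let F be a foliation of M all of whose leaves are geodesic lines. Then F is homeomorphic to the standard foliation of the Euclidean plane ℝ² by parallel straight lines, i.e. there is a homeomorphism of M onto ℝ² carrying leaves of F to parallel straight lines. -/
open Set Filter MeasureTheory Metric
open scoped ENNReal NNReal Topology

/-- A (geodesic) line in a metric space: a map `γ : ℝ → X` with
`d(γ s, γ t) = |s - t|` for all `s, t`, i.e. an isometric embedding of `ℝ`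
(in a Riemannian manifold such a curve is automatically a geodesic that
minimizes the distance between any two of its points). -/
def IsLine {X : Type} [MetricSpace X] (γ : ℝ → X) : Prop :=
  ∀ s t : ℝ, dist (γ s) (γ t) = |s - t|

/-- A (geodesic) ray: a map `γ : ℝ → X` with `d(γ s, γ t) = |s - t|`
for all `s, t ≥ 0`, i.e. an isometric embedding of `[0, ∞)`. -/
def IsRay {X : Type} [MetricSpace X] (γ : ℝ → X) : Prop :=
  ∀ s t : ℝ, 0 ≤ s → 0 ≤ t → dist (γ s) (γ t) = |s - t|

/-- A minimizing (unit-speed) geodesic segment defined on `[a, b]`. -/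
def IsMinimizingSegment {X : Type} [MetricSpace X] (σ : ℝ → X) (a b : ℝ) : Prop :=
  ∀ s ∈ Set.Icc a b, ∀ t ∈ Set.Icc a b, dist (σ s) (σ t) = |s - t|

/-- Two rays are asymptotes if they stay within bounded distance of each other. -/
def Asymptotic {X : Type} [MetricSpace X] (γ σ : ℝ → X) : Prop :=
  ∃ C : ℝ, 0 < C ∧ ∀ t : ℝ, 0 ≤ t → dist (γ t) (σ t) ≤ C

/-- A set is geodesically convex if every minimizing geodesic segment
between two of its points is contained in it. -/
def GeodesicallyConvex {X : Type} [MetricSpace X] (A : Set X) : Prop :=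
  ∀ (σ : ℝ → X) (a b : ℝ), a ≤ b → IsMinimizingSegment σ a b →
    σ a ∈ A → σ b ∈ A → ∀ t ∈ Set.Icc a b, σ t ∈ A

/-- Abstract packaging of a complete Riemannian surface: the underlying metric
space of the Riemannian metric, together with its geodesics, its Gaussian
curvature, its Riemannian area measure, the Riemannian angle, and the
(differential-geometric, hence here abstractly recorded) property of having
no conjugate points. -/
structure RiemannianSurface where
  /-- the underlying set of points -/
  M : Type
  /-- the distance function induced by the Riemannian metric -/
  [metric : MetricSpace M]
  [mble : MeasurableSpace M]
  borel : BorelSpace M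
  /-- the Riemannian metric is complete -/
  complete : CompleteSpace M
  /-- the complete unit-speed geodesics of the Riemannian metric -/
  IsGeodesic : (ℝ → M) → Prop
  /-- the unit-speed geodesic segments `σ : [a, b] → M` of the Riemannian metric -/
  IsGeodesicSegment : (ℝ → M) → ℝ → ℝ → Prop
  /-- a metric line is a (complete, globally minimizing) geodesic -/
  line_isGeodesic : ∀ γ : ℝ → M, IsLine γ → IsGeodesic γ
  /-- the restriction of a complete geodesic to an interval is a geodesic segment -/
  geodesic_isGeodesicSegment : ∀ (γ : ℝ → M) (a b : ℝ), IsGeodesic γ → IsGeodesicSegment γ a b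
  /-- a minimizing segment is a geodesic segment -/
  minimizing_isGeodesicSegment : ∀ (σ : ℝ → M) (a b : ℝ),
    IsMinimizingSegment σ a b → IsGeodesicSegment σ a b
  /-- the Gaussian curvature -/
  K : M → ℝ
  /-- the Riemannian area measure -/
  area : MeasureTheory.Measure M
  /-- `angle p x y` is the angle `∠ₚ(x, y)` at `p` subtended by `x` and `y`
  (the angle at `p` between the initial directions of minimizing geodesics
  from `p` to `x` and to `y`) -/
  angle : M → M → M → ℝ
  /-- the Riemannian metric has no conjugate points: no geodesic contains a pair
  of mutually conjugate points -/
  NoConjugatePoints : Prop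

attribute [instance] RiemannianSurface.metric RiemannianSurface.mble

namespace RiemannianSurface

variable (S : RiemannianSurface)

/-- the total positive curvature `c₊(M) = ∫_M K⁺ dμ`, as an extended nonnegative real -/
noncomputable def cPlus : ℝ≥0∞ := ∫⁻ x, ENNReal.ofReal (S.K x) ∂S.area

/-- `∫_M (-K⁻) dμ = -c₋(M)`, the absolute value of the total negative curvature,
as an extended nonnegative real -/
noncomputable def cMinus : ℝ≥0∞ := ∫⁻ x, ENNReal.ofReal (-S.K x) ∂S.area

/-- `M` admits total curvature if at least one of `c₊(M)`, `c₋(M)` is finite -/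
def AdmitsTotalCurvature : Prop := S.cPlus ≠ ⊤ ∨ S.cMinus ≠ ⊤

/-- the total curvature `c(M) = c₊(M) + c₋(M) = ∫_M K dμ`, as an extended real -/
noncomputable def totalCurvature : EReal := (S.cPlus : EReal) - (S.cMinus : EReal)

/-- the total curvature `c(A) = ∫_A K dμ` of a region `A ⊆ M`, as an extended real -/
noncomputable def cOn (A : Set S.M) : EReal :=
  ((∫⁻ x in A, ENNReal.ofReal (S.K x) ∂S.area : ℝ≥0∞) : EReal) -
    ((∫⁻ x in A, ENNReal.ofReal (-S.K x) ∂S.area : ℝ≥0∞) : EReal)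

/-- `M` satisfies the visibility axiom at `p`: for every `ε > 0` there is `R > 0`
such that every geodesic segment staying at distance `> R` from `p` subtends an
angle at most `ε` at `p`. -/
def VisibilityAt (p : S.M) : Prop :=
  ∀ ε : ℝ, 0 < ε → ∃ R : ℝ, 0 < R ∧
    ∀ (σ : ℝ → S.M) (a b : ℝ), a ≤ b → S.IsGeodesicSegment σ a b →
      (∀ t ∈ Set.Icc a b, R < dist p (σ t)) → S.angle p (σ a) (σ b) ≤ ε

end RiemannianSurface

/-- A foliation of the surface all of whose leaves are geodesic lines:
a partition of `M` into leaves, each of which is the image of a geodesic line,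
which is locally trivial (each point has a foliated chart whose plaques lie
in the leaves). -/
structure GeodesicLineFoliation (S : RiemannianSurface) where
  /-- the leaves of the foliation -/
  leaves : Set (Set S.M)
  covers : ∀ x : S.M, ∃ L ∈ leaves, x ∈ L
  eq_of_inter : ∀ L₁ ∈ leaves, ∀ L₂ ∈ leaves, (L₁ ∩ L₂).Nonempty → L₁ = L₂
  /-- every leaf is a geodesic line -/
  leaf_is_geodesic_line : ∀ L ∈ leaves,
    ∃ γ : ℝ → S.M, IsLine γ ∧ S.IsGeodesic γ ∧ Set.range γ = L
  /-- local triviality: foliated charts whose plaques lie in leaves -/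
  locally_trivial : ∀ x : S.M, ∃ U : Set S.M, IsOpen U ∧ x ∈ U ∧
    ∃ φ : ↥U ≃ₜ (ℝ × ℝ), ∀ c : ℝ, ∃ L ∈ leaves, ∀ t : ℝ, (φ.symm (t, c)).1 ∈ L

/-- any two leaves of the foliation are at finite Hausdorff distance from each other -/
def GeodesicLineFoliation.BoundedHausdorffDistance {S : RiemannianSurface}
    (F : GeodesicLineFoliation S) : Prop :=
  ∀ L₁ ∈ F.leaves, ∀ L₂ ∈ F.leaves, EMetric.hausdorffEdist L₁ L₂ ≠ ⊤

namespace FolAux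

theorem real_isOpenMap {f : ℝ → ℝ} (hf : Continuous f) (hi : Function.Injective f) :
    IsOpenMap f := by
  have key : ∀ g : ℝ → ℝ, Continuous g → StrictMono g → IsOpenMap g := by
    intro g hg hm
    refine IsOpenMap.of_nhds_le fun x => ?_
    intro s hs
    rw [Filter.mem_map, Metric.mem_nhds_iff] at hs
    obtain ⟨ε, hε, hs⟩ := hs
    have h1 : g (x - ε / 2) < g x := hm (by linarith)
    have h2 : g x < g (x + ε / 2) := hm (by linarith)
    refine Filter.mem_of_superset (Ioo_mem_nhds h1 h2) ?_
    intro y hy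
    obtain ⟨z, hz, rfl⟩ := intermediate_value_Icc (by linarith : x - ε / 2 ≤ x + ε / 2)
      hg.continuousOn ⟨hy.1.le, hy.2.le⟩
    apply hs
    rw [Metric.mem_ball, Real.dist_eq, abs_lt]
    constructor <;> linarith [hz.1, hz.2]
  rcases hf.strictMono_of_inj hi with h | h
  · exact key f hf h
  · have := key (fun x => - f x) hf.neg (fun a b hab => neg_lt_neg (h hab))
    have h2 := (Homeomorph.neg ℝ).isOpenMap.comp this
    simpa [Function.comp_def] using h2

variable {X : Type} [MetricSpace X]

theorem IsLine.isometry {γ : ℝ → X} (h : IsLine γ) : Isometry γ :=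
  Isometry.of_dist_eq fun s t => by rw [h s t, Real.dist_eq]

/-- the leaf relation is given by lines -/
def HLines (r : Setoid X) : Prop := ∀ x, ∃ γ : ℝ → X, IsLine γ ∧ range γ = {y | r x y}

def HCharts (r : Setoid X) : Prop := ∀ x, ∃ U : Set X, IsOpen U ∧ x ∈ U ∧
    ∃ φ : ↥U ≃ₜ (ℝ × ℝ), ∀ c t t' : ℝ, r (φ.symm (t, c)).1 (φ.symm (t', c)).1

theorem plaque_open {r : Setoid X} {γ : ℝ → X} (hγ : IsLine γ)
    (hr : ∀ s y, r (γ s) y → y ∈ range γ) {U : Set X} (φ : ↥U ≃ₜ (ℝ × ℝ))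
    (hφ : ∀ c t t' : ℝ, r (φ.symm (t, c)).1 (φ.symm (t', c)).1) (s : ℝ) (hs : γ s ∈ U) :
    ∀ᶠ s' in 𝓝 s, ∃ h : γ s' ∈ U, (φ ⟨γ s', h⟩).2 = (φ ⟨γ s, hs⟩).2 := by
  set c := (φ ⟨γ s, hs⟩).2 with hc
  set t0 := (φ ⟨γ s, hs⟩).1 with ht0
  have h0 : φ.symm (t0, c) = ⟨γ s, hs⟩ := by
    rw [hc, ht0, Prod.mk.eta, φ.symm_apply_apply]
  have hmem : ∀ t, ∃ a, γ a = (φ.symm (t, c)).1 := by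
    intro t
    have := hφ c t0 t
    rw [h0] at this
    exact hr s _ this
  choose a ha using hmem
  have hac : Continuous a := by
    have : Continuous (γ ∘ a) := by
      have : γ ∘ a = fun t => (φ.symm (t, c)).1 := funext ha
      rw [this]
      exact continuous_subtype_val.comp (φ.symm.continuous.comp (by fun_prop))
    exact (IsLine.isometry hγ).isUniformInducing.isInducing.continuous_iff.2 this
  have hai : Function.Injective a := by
    intro t t' h
    have h1 : (φ.symm (t, c)).1 = (φ.symm (t', c)).1 := by rw [← ha, ← ha, h]
    have h2 := φ.symm.injective (Subtype.ext h1)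
    exact (Prod.mk.inj h2).1
  have hop := (real_isOpenMap hac hai).isOpen_range
  have hsr : s ∈ range a := ⟨t0, (IsLine.isometry hγ).injective (by rw [ha, h0])⟩
  filter_upwards [hop.mem_nhds hsr] with s' hs'
  obtain ⟨t, rfl⟩ := hs'
  have h1 : γ (a t) ∈ U := by rw [ha]; exact (φ.symm (t, c)).2
  refine ⟨h1, ?_⟩
  have : (⟨γ (a t), h1⟩ : U) = φ.symm (t, c) := Subtype.ext (ha t)
  rw [this, φ.apply_symm_apply]

theorem mk_isOpenMap {r : Setoid X} (hl : HLines r) (hch : HCharts r) :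
    IsOpenMap (Quotient.mk r) := by
  intro V hV
  rw [← isQuotientMap_quotient_mk'.isOpen_preimage]
  change IsOpen (Quotient.mk r ⁻¹' (Quotient.mk r '' V))
  set S := Quotient.mk r ⁻¹' (Quotient.mk r '' V) with hS
  have hsat : ∀ x y, r x y → x ∈ S → y ∈ S := by
    intro x y hxy hx
    have : Quotient.mk r x = Quotient.mk r y := Quotient.sound hxy
    simp only [hS, mem_preimage] at hx ⊢
    rwa [← this]
  have hVS : V ⊆ interior S := interior_maximal (subset_preimage_image _ _) hV
  rw [← interior_eq_iff_isOpen]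
  refine Subset.antisymm interior_subset ?_
  intro x hx
  obtain ⟨y, hy, hyx⟩ := hx
  have hxy : r x y := r.symm (Quotient.exact hyx)
  obtain ⟨γ, hγ, hγr⟩ := hl x
  have hmem : ∀ z, r x z → ∃ s, γ s = z := fun z hz => by
    have : z ∈ range γ := by rw [hγr]; exact hz
    exact this
  have hmem' : ∀ s, r x (γ s) := fun s => by
    have : γ s ∈ range γ := ⟨s, rfl⟩
    rw [hγr] at this; exact this
  obtain ⟨sx, hsx⟩ := hmem x (r.refl x)
  obtain ⟨sy, hsy⟩ := hmem y hxy
  have hγc := (IsLine.isometry hγ).continuous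
  have hopen : IsOpen (γ ⁻¹' interior S) := isOpen_interior.preimage hγc
  have hclosed : IsClosed (γ ⁻¹' interior S) := by
    refine isClosed_of_closure_subset fun s hs => ?_
    obtain ⟨U, hU, hsU, φ, hφ⟩ := hch (γ s)
    have hp := plaque_open hγ (fun s y h => hmem y (r.trans (hmem' s) h)) φ hφ s hsU
    rw [mem_closure_iff_frequently] at hs
    obtain ⟨s', hs', h', hh⟩ := (hs.and_eventually hp).exists
    -- the slice
    set c := (φ ⟨γ s, hsU⟩).2 with hc
    set t := (φ ⟨γ s', h'⟩).1 with ht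
    have hk : Continuous fun z : ↥U => (φ.symm (t, (φ z).2)).1 := by
      exact continuous_subtype_val.comp (φ.symm.continuous.comp (by fun_prop))
    have hz : (φ.symm (t, (φ ⟨γ s, hsU⟩).2)).1 = γ s' := by
      rw [← hc, ← hh, ht, Prod.mk.eta, φ.symm_apply_apply]
    have ho : IsOpen ((fun z : ↥U => (φ.symm (t, (φ z).2)).1) ⁻¹' interior S) :=
      isOpen_interior.preimage hk
    have ho2 := hU.isOpenEmbedding_subtypeVal.isOpenMap _ ho
    have : Subtype.val '' ((fun z : ↥U => (φ.symm (t, (φ z).2)).1) ⁻¹' interior S) ⊆ S := by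
      rintro _ ⟨z, hz, rfl⟩
      have h1 := interior_subset hz
      refine hsat _ _ ?_ h1
      have := hφ (φ z).2 t (φ z).1
      rwa [Prod.mk.eta, φ.symm_apply_apply] at this
    have h3 := interior_maximal this ho2
    apply h3
    refine ⟨⟨γ s, hsU⟩, ?_, rfl⟩
    simp only [mem_preimage, hz]
    exact hs'
  have huniv := IsClopen.eq_univ ⟨hclosed, hopen⟩ ⟨sy, by
    simp only [mem_preimage, hsy]; exact hVS hy⟩
  have : sx ∈ γ ⁻¹' interior S := by rw [huniv]; trivial
  simpa only [mem_preimage, hsx] using this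

theorem four_reals {X P P' Y ρ ε : ℝ} (h1 : |(|X - Y| - ρ)| < 2 * ε) (h2 : |(|X - P| - ρ)| < 2 * ε)
    (h3 : |(|X - P'| - ρ)| < 2 * ε) (h4 : |(|P - P'| - 2 * ρ)| < 2 * ε) :
    |Y - P| < 10 * ε ∨ |Y - P'| < 10 * ε := by
  by_contra! hcon
  obtain ⟨h5, h6⟩ := hcon
  rw [abs_lt] at h1 h2 h3 h4
  rcases abs_cases (X - Y) with ⟨a1, b1⟩ | ⟨a1, b1⟩ <;>
  rcases abs_cases (X - P) with ⟨a2, b2⟩ | ⟨a2, b2⟩ <;>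
  rcases abs_cases (X - P') with ⟨a3, b3⟩ | ⟨a3, b3⟩ <;>
  rcases abs_cases (P - P') with ⟨a4, b4⟩ | ⟨a4, b4⟩ <;>
  rcases abs_cases (Y - P) with ⟨a5, b5⟩ | ⟨a5, b5⟩ <;>
  rcases abs_cases (Y - P') with ⟨a6, b6⟩ | ⟨a6, b6⟩ <;>
  linarith [h1.1, h1.2, h2.1, h2.2, h3.1, h3.2, h4.1, h4.2]

theorem dist_near {a b a' b' : X} {ε : ℝ} (ha : dist a' a < ε) (hb : dist b' b < ε) :
    |dist a' b' - dist a b| < 2 * ε := by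
  rw [abs_lt]
  have h1 := dist_triangle4 a' a b b'
  have h2 := dist_triangle4 a a' b' b
  rw [dist_comm b b'] at h1
  rw [dist_comm a a'] at h2
  constructor <;> linarith

theorem quot_t2 {r : Setoid X} (hl : HLines r) (hch : HCharts r) : T2Space (Quotient r) := by
  have hop := mk_isOpenMap hl hch
  have hoq : IsOpenQuotientMap (Quotient.mk r) :=
    ⟨Quotient.mk_surjective, continuous_quotient_mk', hop⟩
  rw [t2Space_iff_of_isOpenQuotientMap hoq, ← isOpen_compl_iff, isOpen_iff_mem_nhds]
  rintro ⟨x, y⟩ hxy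
  have hxy : ¬ r x y := fun h => hxy (Quotient.sound h)
  obtain ⟨γ, hγ, hγr⟩ := hl x
  have hmem : ∀ z, r x z → ∃ s, γ s = z := fun z hz => by
    have : z ∈ range γ := by rw [hγr]; exact hz
    exact this
  have hmem' : ∀ s, r x (γ s) := fun s => by
    have : γ s ∈ range γ := ⟨s, rfl⟩
    rw [hγr] at this; exact this
  obtain ⟨sx, hsx⟩ := hmem x (r.refl x)
  set ρ := dist x y with hρ
  have hρ0 : 0 ≤ ρ := dist_nonneg
  set p := γ (sx + ρ) with hp
  set p' := γ (sx - ρ) with hp'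
  have hyp : 0 < dist y p := dist_pos.2 fun h => hxy (h ▸ hmem' _)
  have hyp' : 0 < dist y p' := dist_pos.2 fun h => hxy (h ▸ hmem' _)
  obtain ⟨ε, hε, he1, he2⟩ : ∃ ε > 0, 12 * ε ≤ dist y p ∧ 12 * ε ≤ dist y p' := by
    refine ⟨min (dist y p) (dist y p') / 12, by positivity, ?_, ?_⟩
    · linarith [min_le_left (dist y p) (dist y p')]
    · linarith [min_le_right (dist y p) (dist y p')]
  have hn : ∀ q, r x q → Quotient.mk r ⁻¹' (Quotient.mk r '' ball q ε) ∈ 𝓝 x := by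
    intro q hq
    refine ((hop _ isOpen_ball).preimage continuous_quotient_mk').mem_nhds ?_
    exact ⟨q, mem_ball_self hε, (Quotient.sound hq).symm⟩
  filter_upwards [prod_mem_nhds (inter_mem (ball_mem_nhds x hε)
    (inter_mem (hn p (hmem' _)) (hn p' (hmem' _)))) (ball_mem_nhds y hε)]
  rintro ⟨x', y'⟩ ⟨⟨hx', ⟨q, hq, hqx⟩, ⟨q', hq', hqx'⟩⟩, hy'⟩ hrel
  have hrel : r x' y' := Quotient.exact hrel
  have hqr : r x' q := r.symm (Quotient.exact hqx)
  have hqr' : r x' q' := r.symm (Quotient.exact hqx')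
  obtain ⟨β, hβ, hβr⟩ := hl x'
  have hm : ∀ z, r x' z → ∃ s, β s = z := fun z hz => by
    have : z ∈ range β := by rw [hβr]; exact hz
    exact this
  obtain ⟨A, rfl⟩ := hm x' (r.refl x')
  obtain ⟨B, rfl⟩ := hm y' hrel
  obtain ⟨P, rfl⟩ := hm q hqr
  obtain ⟨P', rfl⟩ := hm q' hqr'
  simp only [mem_ball] at *
  have d1 := dist_near hx' hy'
  have d2 := dist_near hx' hq
  have d3 := dist_near hx' hq'
  have d4 := dist_near hq hq'
  have e2 : dist x p = ρ := by rw [← hsx, hp, hγ, sub_add_cancel_left, abs_neg, abs_of_nonneg hρ0]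
  have e3 : dist x p' = ρ := by rw [← hsx, hp', hγ, sub_sub_cancel, abs_of_nonneg hρ0]
  have e4 : dist p p' = 2 * ρ := by
    rw [hp, hp', hγ, abs_of_nonneg] <;> linarith
  rw [hβ] at d1 d2 d3 d4
  rw [e2] at d2
  rw [e3] at d3
  rw [e4] at d4
  rcases four_reals d1 d2 d3 d4 with h | h
  · rw [← hβ] at h
    have := dist_triangle4 y (β B) (β P) p
    rw [dist_comm y (β B)] at this
    linarith
  · rw [← hβ] at h
    have := dist_triangle4 y (β B) (β P') p'
    rw [dist_comm y (β B)] at this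
    linarith

theorem exists_transversal {r : Setoid X} (hl : HLines r) (hch : HCharts r) (x : X) :
    ∃ τ : ℝ → X, Continuous τ ∧ τ 0 = x ∧
      Topology.IsOpenEmbedding (fun t => Quotient.mk r (τ t)) := by
  have hop := mk_isOpenMap hl hch
  obtain ⟨U, hU, hxU, φ, hφ⟩ := hch x
  obtain ⟨ε, hε, hball⟩ := Metric.isOpen_iff.1 hU x hxU
  set c := (φ ⟨x, hxU⟩).2 with hc
  set t0 := (φ ⟨x, hxU⟩).1 with ht0
  set σ : ℝ → X := fun a => (φ.symm (t0, a)).1 with hσ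
  have hσc : Continuous σ :=
    continuous_subtype_val.comp (φ.symm.continuous.comp (by fun_prop))
  have hσx : σ c = x := by
    simp only [hσ, hc, ht0, Prod.mk.eta, φ.symm_apply_apply]
  obtain ⟨δ, hδ, hδb⟩ := Metric.mem_nhds_iff.1 (hσc.continuousAt.preimage_mem_nhds
    (by rw [hσx]; exact ball_mem_nhds x (by positivity : 0 < ε / 3)))
  have hinj : ∀ a ∈ ball c δ, ∀ b ∈ ball c δ, r (σ a) (σ b) → a = b := by
    intro a ha b hb hab
    have ha' : dist (σ a) x < ε / 3 := hδb ha
    have hb' : dist (σ b) x < ε / 3 := hδb hb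
    obtain ⟨γ, hγ, hγr⟩ := hl (σ a)
    have hmem : ∀ z, r (σ a) z → ∃ s, γ s = z := fun z hz => by
      have : z ∈ range γ := by rw [hγr]; exact hz
      exact this
    have hmem' : ∀ s, r (σ a) (γ s) := fun s => by
      have : γ s ∈ range γ := ⟨s, rfl⟩
      rw [hγr] at this; exact this
    obtain ⟨s, hs⟩ := hmem _ (r.refl _)
    obtain ⟨t, ht⟩ := hmem _ hab
    have hst : |s - t| < 2 * ε / 3 := by
      rw [← hγ, hs, ht]
      have := dist_triangle_right (σ a) (σ b) x
      linarith
    have hsub : ∀ w ∈ uIcc s t, γ w ∈ U := by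
      intro w hw
      apply hball
      rw [mem_ball]
      have h1 : dist (γ w) (γ s) ≤ |s - t| := by
        rw [hγ]
        have := abs_sub_left_of_mem_uIcc hw
        rw [abs_sub_comm s t]; exact this
      have := dist_triangle (γ w) (γ s) x
      rw [hs] at this h1
      linarith
    have hcst : ∀ w w' : uIcc s t, (φ ⟨γ w, hsub w w.2⟩).2 = (φ ⟨γ w', hsub w' w'.2⟩).2 := by
      have : PreconnectedSpace (uIcc s t) := isPreconnected_iff_preconnectedSpace.1
        isPreconnected_uIcc
      have hlc : IsLocallyConstant fun w : uIcc s t => (φ ⟨γ w, hsub w w.2⟩).2 := by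
        rw [IsLocallyConstant.iff_eventually_eq]
        intro w
        have hp := plaque_open hγ (fun s y h => hmem y (r.trans (hmem' s) h)) φ hφ w (hsub w w.2)
        filter_upwards [continuous_subtype_val.continuousAt.eventually hp] with w' hw'
        obtain ⟨_, h⟩ := hw'
        exact h
      exact fun w w' => hlc.apply_eq_of_preconnectedSpace w w'
    have h := hcst ⟨s, left_mem_uIcc⟩ ⟨t, right_mem_uIcc⟩
    have e : ∀ (w : ℝ) (hw : γ w ∈ U) (a : ℝ), γ w = σ a → (φ ⟨γ w, hw⟩).2 = a := by
      intro w hw a h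
      have : (⟨γ w, hw⟩ : U) = φ.symm (t0, a) := Subtype.ext h
      rw [this, φ.apply_symm_apply]
    rw [e s _ a hs, e t _ b ht] at h
    exact h
  set ψ := OpenPartialHomeomorph.univBall (E := ℝ) c δ with hψ
  have hψs : ψ.source = univ := OpenPartialHomeomorph.univBall_source c δ
  have hψt : ψ.target = ball c δ := OpenPartialHomeomorph.univBall_target c hδ
  have hψc : Continuous ψ := OpenPartialHomeomorph.continuous_univBall c δ
  have hψm : ∀ t, ψ t ∈ ball c δ := fun t => hψt ▸ ψ.map_source (by rw [hψs]; trivial)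
  refine ⟨σ ∘ ψ, hσc.comp hψc, ?_, ?_⟩
  · simp only [Function.comp, hψ, OpenPartialHomeomorph.univBall_apply_zero, hσx]
  refine Topology.IsOpenEmbedding.of_continuous_injective_isOpenMap
    (continuous_quotient_mk'.comp (hσc.comp hψc)) ?_ ?_
  · intro a b hab
    have := hinj _ (hψm a) _ (hψm b) (Quotient.exact hab)
    exact ψ.injOn (by rw [hψs]; trivial) (by rw [hψs]; trivial) this
  · intro I hI
    have h1 : IsOpen (ψ '' I) := ψ.isOpen_image_of_subset_source hI (by rw [hψs]; exact subset_univ _)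
    have h2 : IsOpen {z : U | (φ z).2 ∈ ψ '' I} :=
      h1.preimage (continuous_snd.comp φ.continuous)
    have h3 := hop _ (hU.isOpenEmbedding_subtypeVal.isOpenMap _ h2)
    convert h3 using 1
    ext q
    constructor
    · rintro ⟨a, ha, rfl⟩
      refine ⟨_, ⟨φ.symm (t0, ψ a), ?_, rfl⟩, rfl⟩
      simp only [mem_ofPred_eq, φ.apply_symm_apply]
      exact ⟨a, ha, rfl⟩
    · rintro ⟨_, ⟨z, ⟨a, ha, haz⟩, rfl⟩, rfl⟩
      refine ⟨a, ha, Quotient.sound ?_⟩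
      have := hφ (φ z).2 t0 (φ z).1
      rw [Prod.mk.eta, φ.symm_apply_apply, ← haz] at this
      exact this

end FolAux
namespace FolAux

theorem int_const {A : Type*} [TopologicalSpace A] {S : Set A} (hS : IsPreconnected S) {g : A → ℝ}
    (hg : ContinuousOn g S) (hz : ∀ x ∈ S, ∃ n : ℤ, g x = n) {x y : A} (hx : x ∈ S) (hy : y ∈ S) :
    g x = g y := by
  have key : ∀ x ∈ S, ∀ y ∈ S, ¬ g x < g y := by
    intro x hx y hy h
    obtain ⟨n, hn⟩ := hz x hx
    obtain ⟨m, hm⟩ := hz y hy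
    have hnm : n + 1 ≤ m := by
      rw [hn, hm] at h
      exact_mod_cast h
    have hnm' : (n : ℝ) + 1 ≤ m := by exact_mod_cast hnm
    have hv : (n : ℝ) + 1 / 2 ∈ Icc (g x) (g y) := by
      rw [hn, hm]; constructor <;> linarith
    obtain ⟨w, hw, hwv⟩ := hS.intermediate_value hx hy hg hv
    obtain ⟨k, hk⟩ := hz w hw
    rw [hk] at hwv
    have h1 : (n : ℝ) < k := by linarith
    have h2 : (k : ℝ) < n + 1 := by linarith
    have h1' : n < k := by exact_mod_cast h1
    have h2' : k < n + 1 := by exact_mod_cast h2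
    omega
  exact le_antisymm (not_lt.1 (key y hy x hx)) (not_lt.1 (key x hx y hy))

theorem coe_eq_int {a b : ℝ} (h : (a : AddCircle (1 : ℝ)) = b) : ∃ n : ℤ, a - b = n := by
  have h1 : ((a - b : ℝ) : AddCircle (1 : ℝ)) = 0 := by rw [AddCircle.coe_sub, h, sub_self]
  obtain ⟨n, hn⟩ := (AddCircle.coe_eq_zero_iff (1 : ℝ)).1 h1
  exact ⟨n, by rw [← hn]; simp⟩

theorem exists_step {X Q : Type*} [TopologicalSpace X] [TopologicalSpace Q] [T2Space Q]
    [SimplyConnectedSpace X] [LocallyPathConnectedSpace X] {π : X → Q}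
    (hπ : Topology.IsQuotientMap π) (hfib : ∀ q, IsPreconnected (π ⁻¹' {q}))
    {e : ℝ → Q} (he : Topology.IsOpenEmbedding e) :
    ∃ f : Q → ℝ, Continuous f ∧ (∀ q, f q ∈ Icc (0 : ℝ) 1) ∧ (∀ t ∈ Icc (0 : ℝ) 1, f (e t) = t) ∧
      ∀ q, f q ∈ Ioo (0 : ℝ) 1 → q = e (f q) := by
  classical
  let F : Q → AddCircle (1 : ℝ) := fun q =>
    if q ∈ range e then ((max 0 (min 1 (Function.invFun e q)) : ℝ) : AddCircle (1 : ℝ)) else 0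
  have hFe : ∀ t, F (e t) = ((max 0 (min 1 t) : ℝ) : AddCircle (1 : ℝ)) := by
    intro t
    simp only [F, mem_range_self, if_true, Function.leftInverse_invFun he.injective t]
  have h10 : ((1 : ℝ) : AddCircle (1 : ℝ)) = 0 := AddCircle.coe_period 1
  have hF0 : ∀ q, q ∉ e '' Icc 0 1 → F q = 0 := by
    intro q hq
    by_cases hr : q ∈ range e
    · obtain ⟨t, rfl⟩ := hr
      rw [hFe]
      have ht : t ∉ Icc (0 : ℝ) 1 := fun h => hq ⟨t, h, rfl⟩
      rw [mem_Icc, not_and_or, not_le, not_le] at ht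
      rcases ht with ht | ht
      · rw [min_eq_right (by linarith), max_eq_left ht.le, AddCircle.coe_zero]
      · rw [min_eq_left ht.le, max_eq_right zero_le_one, h10]
    · simp only [F, hr, if_false]
  have hFI : ∀ q, q ∉ e '' Ioo 0 1 → F q = 0 := by
    intro q hq
    by_cases hr : q ∈ e '' Icc 0 1
    · obtain ⟨t, ht, rfl⟩ := hr
      have ht2 : ¬ (0 < t ∧ t < 1) := fun h => hq ⟨t, h, rfl⟩
      rw [hFe]
      by_cases h0 : 0 < t
      · have : t = 1 := le_antisymm ht.2 (not_lt.1 fun h => ht2 ⟨h0, h⟩)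
        subst this; simp [h10]
      · have : t = 0 := le_antisymm (not_lt.1 h0) ht.1
        subst this; simp
    · exact hF0 q hr
  have hK : IsClosed (e '' Icc 0 1) := (isCompact_Icc.image he.continuous).isClosed
  have hFc : Continuous F := by
    rw [continuous_iff_continuousAt]
    intro q
    by_cases hq : q ∈ e '' Icc 0 1
    · obtain ⟨t, ht, rfl⟩ := hq
      rw [← he.continuousAt_iff]
      have : F ∘ e = fun t => ((max 0 (min 1 t) : ℝ) : AddCircle (1 : ℝ)) := funext hFe
      rw [this]
      exact ((AddCircle.continuous_mk' (1 : ℝ)).comp (by fun_prop)).continuousAt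
    · have : F =ᶠ[𝓝 q] fun _ => 0 := by
        filter_upwards [hK.isOpen_compl.mem_nhds hq] with q' hq'
        exact hF0 q' hq'
      exact continuousAt_const.congr this.symm
  obtain ⟨x0, hx0⟩ := hπ.surjective (e 0)
  obtain ⟨L, ⟨hL0, hL⟩, -⟩ :=
    (AddCircle.isCoveringMap_coe (1 : ℝ)).existsUnique_continuousMap_lifts
      (⟨F ∘ π, hFc.comp hπ.continuous⟩ : C(X, AddCircle (1 : ℝ))) x0 0 (by simp [hx0, hFe])
  have hL' : ∀ x, ((L x : ℝ) : AddCircle (1 : ℝ)) = F (π x) := fun x => congrFun hL x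
  have hconst : ∀ x y, π x = π y → L x = L y := by
    intro x y hxy
    have := int_const (hfib (π x)) (g := fun z => L z - L x) (by fun_prop) (by
      intro z hz
      apply coe_eq_int
      rw [hL', hL', show π z = π x from hz]) (x := x) (y := y) rfl hxy.symm
    linarith
  have hex : ∀ q, ∃ x, π x = q := hπ.surjective
  choose s hs using hex
  let f : Q → ℝ := fun q => L (s q)
  have hfπ : ∀ x, f (π x) = L x := fun x => hconst _ _ (hs _)
  have hfc : Continuous f := by
    rw [hπ.continuous_iff]
    have : f ∘ π = L := funext hfπ
    rw [this]; exact L.continuous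
  have hfF : ∀ q, ((f q : ℝ) : AddCircle (1 : ℝ)) = F q := fun q => by
    show ((L (s q) : ℝ) : AddCircle (1 : ℝ)) = F q
    rw [hL', hs]
  have hf0 : f (e 0) = 0 := by rw [← hx0, hfπ, hL0]
  have hfe : ∀ t ∈ Icc (0 : ℝ) 1, f (e t) = t := by
    intro t ht
    have := int_const (isPreconnected_Icc (a := (0 : ℝ)) (b := 1)) (g := fun t => f (e t) - t)
      ((hfc.comp he.continuous).sub continuous_id).continuousOn (by
        intro w hw
        apply coe_eq_int
        rw [hfF, hFe, min_eq_right hw.2, max_eq_right hw.1]) (x := t) (y := 0) ht (by simp)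
    simp only [hf0] at this
    linarith
  have hQ : IsPreconnected (univ : Set Q) := by
    rw [← image_univ_of_surjective hπ.surjective]
    exact isPreconnected_univ.image _ hπ.continuous.continuousOn
  have hinteger : ∀ q, q ∉ e '' Ioo 0 1 → ∃ n : ℤ, f q = n := by
    intro q hq
    obtain ⟨n, hn⟩ := coe_eq_int (a := f q) (b := 0) (by rw [hfF, hFI q hq, AddCircle.coe_zero])
    exact ⟨n, by linarith⟩
  -- a non-integer value outside the unit interval is impossible
  have hno : ∀ q, ∀ n : ℤ, (n : ℝ) < f q → f q < n + 1 → ∃ t ∈ Ioo (0 : ℝ) 1, q = e t ∧ f q = t := by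
    intro q n h1 h2
    by_cases hq : q ∈ e '' Ioo 0 1
    · obtain ⟨t, ht, rfl⟩ := hq
      exact ⟨t, ht, rfl, hfe t ⟨ht.1.le, ht.2.le⟩⟩
    · obtain ⟨k, hk⟩ := hinteger q hq
      rw [hk] at h1 h2
      have h1' : n < k := by exact_mod_cast h1
      have h2' : k < n + 1 := by exact_mod_cast h2
      omega
  refine ⟨f, hfc, ?_, hfe, ?_⟩
  · intro q
    constructor
    · by_contra! h
      have hm : 0 > max (f q) (-1 / 2) := by rw [gt_iff_lt, max_lt_iff]; constructor <;> linarith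
      obtain ⟨v, hv1, hv2⟩ := exists_between hm
      rw [max_lt_iff] at hv1
      obtain ⟨w, -, hw⟩ := hQ.intermediate_value (mem_univ q) (mem_univ (e 0)) hfc.continuousOn
        (show v ∈ Icc (f q) (f (e 0)) by rw [hf0]; exact ⟨hv1.1.le, hv2.le⟩)
      obtain ⟨t, ht, -, h⟩ := hno w (-1) (by push_cast; linarith [hv1.2]) (by push_cast; linarith)
      linarith [ht.1]
    · by_contra! h
      have hm : 1 < min (f q) (3 / 2) := by rw [lt_min_iff]; constructor <;> linarith
      obtain ⟨v, hv2, hv1⟩ := exists_between hm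
      rw [lt_min_iff] at hv1
      obtain ⟨w, -, hw⟩ := hQ.intermediate_value (mem_univ (e 0)) (mem_univ q) hfc.continuousOn
        (show v ∈ Icc (f (e 0)) (f q) by rw [hf0]; exact ⟨by linarith, hv1.1.le⟩)
      obtain ⟨t, ht, -, h⟩ := hno w 1 (by push_cast; linarith [hv1.2]) (by push_cast; linarith)
      linarith [ht.2]
  · intro q hq
    obtain ⟨t, ht, h1, h2⟩ := hno q 0 (by simpa using hq.1) (by simpa using hq.2)
    rw [h2]; exact h1

end FolAux
namespace FolAux

theorem exists_subinterval {Q : Type*} [TopologicalSpace Q] {e : ℝ → Q}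
    (he : Topology.IsOpenEmbedding e) {a b : ℝ} (hab : a < b) :
    ∃ ε : ℝ → Q, Topology.IsOpenEmbedding ε ∧ range ε = e '' Ioo a b := by
  have hδ : 0 < (b - a) / 2 := by linarith
  set ψ := OpenPartialHomeomorph.univBall (E := ℝ) ((a + b) / 2) ((b - a) / 2) with hψ
  have hψs : ψ.source = univ := OpenPartialHomeomorph.univBall_source _ _
  have hψt : ψ.target = ball ((a + b) / 2) ((b - a) / 2) :=
    OpenPartialHomeomorph.univBall_target _ hδ
  refine ⟨e ∘ ψ, he.comp (ψ.isOpenEmbedding hψs), ?_⟩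
  rw [range_comp, ← image_univ, ← hψs, ψ.image_source_eq_target, hψt, Real.ball_eq_Ioo]
  congr 2 <;> ring

theorem local_inj_union {Q : Type*} [TopologicalSpace Q] [T2Space Q] {G : Q → ℝ}
    (hG : Continuous G) (hGo : IsOpenMap G) {U V : Set Q} (hU : IsOpen U) (hV : IsOpen V)
    (hUc : IsPreconnected U) (hVc : IsPreconnected V) (hUi : InjOn G U) (hVi : InjOn G V)
    {w : Q} (hwU : w ∈ U) (hwV : w ∈ V) {u v : Q} (hu : u ∈ U) (hv : v ∈ V) (huv : G u = G v) :
    u = v := by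
  set I := G '' U ∩ G '' V with hI
  set T := G '' (U ∩ V) with hT
  have hIc : IsPreconnected I := by
    have h1 := (hUc.image G hG.continuousOn).ordConnected
    have h2 := (hVc.image G hG.continuousOn).ordConnected
    exact (h1.inter h2).isPreconnected
  have hTo : IsOpen T := hGo _ (hU.inter hV)
  have hIT : IsOpen (I \ T) := by
    rw [isOpen_iff_mem_nhds]
    rintro y ⟨⟨⟨a, ha, hay⟩, ⟨b, hb, hby⟩⟩, hyT⟩
    have hab : a ≠ b := by
      rintro rfl
      exact hyT ⟨a, ⟨ha, hb⟩, hay⟩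
    obtain ⟨A, B, hA, hB, haA, hbB, hAB⟩ := t2_separation hab
    have n1 : G '' (A ∩ U) ∈ 𝓝 y := (hGo _ (hA.inter hU)).mem_nhds ⟨a, ⟨haA, ha⟩, hay⟩
    have n2 : G '' (B ∩ V) ∈ 𝓝 y := (hGo _ (hB.inter hV)).mem_nhds ⟨b, ⟨hbB, hb⟩, hby⟩
    filter_upwards [n1, n2]
    rintro y' ⟨a', ⟨ha'A, ha'U⟩, ha'⟩ ⟨b', ⟨hb'B, hb'V⟩, hb'⟩
    refine ⟨⟨⟨a', ha'U, ha'⟩, ⟨b', hb'V, hb'⟩⟩, ?_⟩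
    rintro ⟨c, ⟨hcU, hcV⟩, hc⟩
    have e1 : c = a' := hUi hcU ha'U (hc.trans ha'.symm)
    have e2 : c = b' := hVi hcV hb'V (hc.trans hb'.symm)
    subst e1
    subst e2
    exact hAB.le_bot ⟨ha'A, hb'B⟩
  have hsub : I ⊆ T := by
    refine hIc.subset_left_of_subset_union hTo hIT disjoint_sdiff_right ?_ ?_
    · intro y hy
      by_cases h : y ∈ T
      · exact Or.inl h
      · exact Or.inr ⟨hy, h⟩
    · exact ⟨G w, ⟨⟨w, hwU, rfl⟩, ⟨w, hwV, rfl⟩⟩, ⟨w, ⟨hwU, hwV⟩, rfl⟩⟩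
  obtain ⟨c, ⟨hcU, hcV⟩, hc⟩ := hsub (show G u ∈ I from ⟨⟨u, hu, rfl⟩, ⟨v, hv, huv.symm⟩⟩)
  rw [← hUi hcU hu hc, ← hVi hcV hv (hc.trans huv)]

theorem inj_of_local {Q : Type*} [TopologicalSpace Q] [T2Space Q] [ConnectedSpace Q] {G : Q → ℝ}
    (hG : Continuous G) (hGo : IsOpenMap G)
    (hloc : ∀ q, ∃ N, IsOpen N ∧ IsPreconnected N ∧ q ∈ N ∧ InjOn G N) :
    Function.Injective G := by
  obtain ⟨q0⟩ := (inferInstance : Nonempty Q)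
  set C : Set (Set Q) := {U | IsOpen U ∧ IsPreconnected U ∧ q0 ∈ U ∧ InjOn G U} with hC
  have hWo : IsOpen (⋃₀ C) := isOpen_sUnion fun U hU => hU.1
  have hWc : IsPreconnected (⋃₀ C) :=
    isPreconnected_sUnion q0 C (fun U hU => hU.2.2.1) (fun U hU => hU.2.1)
  have hWi : InjOn G (⋃₀ C) := by
    rintro u ⟨U, hU, hu⟩ v ⟨V, hV, hv⟩ huv
    exact local_inj_union hG hGo hU.1 hV.1 hU.2.1 hV.2.1 hU.2.2.2 hV.2.2.2 hU.2.2.1 hV.2.2.1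
      hu hv huv
  have hq0 : q0 ∈ ⋃₀ C := by
    obtain ⟨N, h1, h2, h3, h4⟩ := hloc q0
    exact ⟨N, ⟨h1, h2, h3, h4⟩, h3⟩
  have hcl : IsClosed (⋃₀ C) := by
    refine isClosed_of_closure_subset fun q hq => ?_
    obtain ⟨N, h1, h2, h3, h4⟩ := hloc q
    obtain ⟨w, hwN, hwW⟩ := mem_closure_iff.1 hq N h1 h3
    refine ⟨⋃₀ C ∪ N, ⟨hWo.union h1, hWc.union w hwW hwN h2, Or.inl hq0, ?_⟩, Or.inr h3⟩
    have key : ∀ u ∈ ⋃₀ C, ∀ v ∈ N, G u = G v → u = v := fun u hu v hv huv =>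
      local_inj_union hG hGo hWo h1 hWc h2 hWi h4 hwW hwN hu hv huv
    rintro u (hu | hu) v (hv | hv) huv
    · exact hWi hu hv huv
    · exact key u hu v hv huv
    · exact (key v hv u hu huv.symm).symm
    · exact h4 hu hv huv
  have huniv := IsClopen.eq_univ ⟨hcl, hWo⟩ ⟨q0, hq0⟩
  rw [huniv] at hWi
  exact injOn_univ.1 hWi

section
variable {Q : Type*} [TopologicalSpace Q] [ConnectedSpace Q]

theorem conn_ge {f : Q → ℝ} (hf : Continuous f)
    {x : Q} (hi : ∀ q, f q = f x → q = x) : IsPreconnected {q | f x ≤ f q} := by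
  classical
  have hc : Continuous fun q => if f x ≤ f q then q else x :=
    Continuous.if_le continuous_id continuous_const continuous_const hf
      (fun q hq => hi q hq.symm)
  have := isPreconnected_range hc
  convert this using 1
  ext q
  simp only [mem_range]
  constructor
  · intro (hq : f x ≤ f q)
    exact ⟨q, if_pos hq⟩
  · rintro ⟨y, rfl⟩
    show f x ≤ _
    split_ifs with h
    · exact h
    · exact le_rfl

theorem conn_le {f : Q → ℝ} (hf : Continuous f)
    {x : Q} (hi : ∀ q, f q = f x → q = x) : IsPreconnected {q | f q ≤ f x} := by
  have := conn_ge (f := fun q => - f q) hf.neg (x := x) (fun q hq => hi q (neg_injective hq))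
  simpa using this

theorem between_aux {f h : Q → ℝ} (hf : Continuous f) (hh : Continuous h)
    (hr : ∀ q, h q ∈ Icc (0 : ℝ) 1) (hhi : ∀ q q', h q ∈ Ioo (0 : ℝ) 1 → h q = h q' → q = q')
    {x y z : Q} (hi : ∀ q, f q = f x → q = x) (hz : f z ≤ f x) (hy : f x ≤ f y) :
    ¬ (h x < h z ∧ h x < h y) := by
  rintro ⟨h1, h2⟩
  obtain ⟨v, hv1, hv2⟩ := exists_between (lt_min h1 h2)
  rw [lt_min_iff] at hv2
  obtain ⟨w1, hw1, e1⟩ := (conn_le hf hi).intermediate_value (a := x) (b := z) (show f x ≤ f x from le_rfl) hz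
    hh.continuousOn ⟨hv1.le, hv2.1.le⟩
  obtain ⟨w2, hw2, e2⟩ := (conn_ge hf hi).intermediate_value (a := x) (b := y) (show f x ≤ f x from le_rfl) hy
    hh.continuousOn ⟨hv1.le, hv2.2.le⟩
  have hv : v ∈ Ioo (0 : ℝ) 1 := ⟨(hr x).1.trans_lt hv1, hv2.1.trans_le (hr z).2⟩
  have h12 : w1 = w2 := hhi w1 w2 (by rw [e1]; exact hv) (e1.trans e2.symm)
  subst h12
  have : w1 = x := hi w1 (le_antisymm hw1 hw2)
  rw [this] at e1
  linarith

theorem between {f h : Q → ℝ} (hf : Continuous f) (hh : Continuous h)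
    (hr : ∀ q, h q ∈ Icc (0 : ℝ) 1) (hhi : ∀ q q', h q ∈ Ioo (0 : ℝ) 1 → h q = h q' → q = q')
    {x y z : Q} (hi : ∀ q, f q = f x → q = x) (hzy : f x ∈ uIcc (f z) (f y)) :
    |h x - h z| ≤ |h y - h z| := by
  have key : ∀ y z, f z ≤ f x → f x ≤ f y → ¬ (h x < h z ∧ h x < h y) ∧ ¬ (h z < h x ∧ h y < h x) := by
    intro y z h1 h2
    refine ⟨between_aux hf hh hr hhi hi h1 h2, ?_⟩
    have := between_aux (f := f) (h := fun q => 1 - h q) hf (by fun_prop)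
      (fun q => ⟨by linarith [(hr q).2], by linarith [(hr q).1]⟩)
      (fun q q' hq hqq => hhi q q' ⟨by linarith [hq.2], by linarith [hq.1]⟩ (by linarith)) hi h1 h2
    rintro ⟨a, b⟩
    exact this ⟨by linarith, by linarith⟩
  have key2 : ¬ (h x < h z ∧ h x < h y) ∧ ¬ (h z < h x ∧ h y < h x) := by
    rw [mem_uIcc] at hzy
    rcases hzy with ⟨a, b⟩ | ⟨a, b⟩
    · exact key y z a b
    · have := key z y a b
      exact ⟨fun c => this.1 c.symm, fun c => this.2 c.symm⟩
  obtain ⟨k1, k2⟩ := key2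
  rw [not_and_or, not_lt, not_lt] at k1 k2
  rcases abs_cases (h x - h z) with ⟨a1, b1⟩ | ⟨a1, b1⟩ <;>
  rcases abs_cases (h y - h z) with ⟨a2, b2⟩ | ⟨a2, b2⟩ <;>
  rcases k1 with k1 | k1 <;> rcases k2 with k2 | k2 <;> linarith

end

theorem quot_real {Q : Type*} [TopologicalSpace Q] [ConnectedSpace Q] [T2Space Q]
    (f : ℕ → Q → ℝ) (e : ℕ → ℝ → Q) (he : ∀ n, Topology.IsOpenEmbedding (e n))
    (hf : ∀ n, Continuous (f n)) (hr : ∀ n q, f n q ∈ Icc (0 : ℝ) 1)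
    (hfe : ∀ n, ∀ t ∈ Icc (0 : ℝ) 1, f n (e n t) = t)
    (hef : ∀ n q, f n q ∈ Ioo (0 : ℝ) 1 → q = e n (f n q))
    (hcov : ∀ q, ∃ n, f n q ∈ Ioo (0 : ℝ) 1) : Nonempty (Q ≃ₜ ℝ) := by
  classical
  have hinj : ∀ n q q', f n q ∈ Ioo (0 : ℝ) 1 → f n q = f n q' → q = q' := by
    intro n q q' hq hqq
    rw [hef n q hq, hef n q' (hqq ▸ hq), hqq]
  obtain ⟨z⟩ := (inferInstance : Nonempty Q)
  obtain ⟨k0, hk0⟩ := hcov z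
  have hsum : Summable fun n : ℕ => ((1 : ℝ) / 2) ^ n := summable_geometric_two
  have hb : ∀ n x, |f n x - f n z| ≤ 1 := by
    intro n x
    rw [abs_le]
    constructor <;> linarith [(hr n x).1, (hr n x).2, (hr n z).1, (hr n z).2]
  have hb2 : ∀ n x, ((1 : ℝ) / 2) ^ n * |f n x - f n z| ≤ (1 / 2) ^ n := fun n x =>
    mul_le_of_le_one_right (by positivity) (hb n x)
  have hsx : ∀ x, Summable fun n : ℕ => ((1 : ℝ) / 2) ^ n * |f n x - f n z| := fun x =>
    Summable.of_nonneg_of_le (fun n => by positivity) (fun n => hb2 n x) hsum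
  set D : Q → ℝ := fun x => ∑' n : ℕ, ((1 : ℝ) / 2) ^ n * |f n x - f n z| with hD
  have hDc : Continuous D := by
    refine continuous_tsum (fun n => ?_) hsum (fun n x => ?_)
    · have := hf n
      fun_prop
    · rw [Real.norm_of_nonneg (by positivity)]
      exact hb2 n x
  have hDz : D z = 0 := by simp [hD]
  have hDnn : ∀ x, 0 ≤ D x := fun x => tsum_nonneg fun n => by positivity
  have hDle : ∀ x, D x ≤ 2 := fun x => by
    rw [← tsum_geometric_two]
    exact (hsx x).tsum_le_tsum (fun n => hb2 n x) hsum
  have hDlt : ∀ k x y, f k x ∈ Ioo (0 : ℝ) 1 → f k x ∈ uIcc (f k z) (f k y) → f k x ≠ f k y →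
      D x < D y := by
    intro k x y hx hm hne
    refine Summable.tsum_lt_tsum (i := k) (fun n => ?_) ?_ (hsx x) (hsx y)
    · exact mul_le_mul_of_nonneg_left (between (hf k) (hf n) (hr n) (hinj n)
        (fun q hq => (hinj k x q hx hq.symm).symm) hm) (by positivity)
    · refine mul_lt_mul_of_pos_left ?_ (by positivity)
      rw [mem_uIcc] at hm
      rcases hm with ⟨a, b⟩ | ⟨a, b⟩
      · have := lt_of_le_of_ne b hne
        rw [abs_of_nonneg (by linarith), abs_of_nonneg (by linarith)]
        linarith
      · have := lt_of_le_of_ne a hne.symm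
        rw [abs_of_nonpos (by linarith), abs_of_nonpos (by linarith)]
        linarith
  set G : Q → ℝ := fun x => if f k0 z ≤ f k0 x then D x else - D x with hG
  have hGc : Continuous G := by
    refine Continuous.if_le hDc hDc.neg continuous_const (hf k0) ?_
    intro x hx
    have := hinj k0 z x hk0 hx
    rw [← this, hDz, neg_zero]
  -- sign is constant on preconnected sets avoiding z
  have hsign : ∀ S : Set Q, IsPreconnected S → z ∉ S → ∀ x ∈ S, ∀ y ∈ S,
      f k0 z ≤ f k0 x → f k0 z ≤ f k0 y := by
    intro S hS hz x hx y hy hxz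
    by_contra! hyz
    obtain ⟨w, hw, hwv⟩ := hS.intermediate_value hy hx (hf k0).continuousOn ⟨hyz.le, hxz⟩
    have := hinj k0 z w hk0 hwv.symm
    exact hz (this ▸ hw)
  have hne : ∀ k x y, f k x ∈ Ioo (0 : ℝ) 1 → f k x ∈ uIcc (f k z) (f k y) → f k x ≠ f k y →
      f k x ≠ f k z → G x ≠ G y := by
    intro k x y hx hm hxy hxz
    have hlt := hDlt k x y hx hm hxy
    have hi : ∀ q, f k q = f k x → q = x := fun q hq => (hinj k x q hx hq.symm).symm
    have hs : f k0 z ≤ f k0 x ↔ f k0 z ≤ f k0 y := by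
      rw [mem_uIcc] at hm
      rcases hm with ⟨a, b⟩ | ⟨a, b⟩
      · have hz : z ∉ {q | f k x ≤ f k q} := fun h => hxz (le_antisymm h a)
        exact ⟨hsign _ (conn_ge (hf k) hi) hz x (show f k x ≤ f k x from le_rfl) y b,
          hsign _ (conn_ge (hf k) hi) hz y b x (show f k x ≤ f k x from le_rfl)⟩
      · have hz : z ∉ {q | f k q ≤ f k x} := fun h => hxz (le_antisymm b h)
        exact ⟨hsign _ (conn_le (hf k) hi) hz x (show f k x ≤ f k x from le_rfl) y a,
          hsign _ (conn_le (hf k) hi) hz y a x (show f k x ≤ f k x from le_rfl)⟩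
    simp only [hG]
    by_cases h : f k0 z ≤ f k0 x
    · rw [if_pos h, if_pos (hs.1 h)]
      exact hlt.ne
    · rw [if_neg h, if_neg (fun h' => h (hs.2 h'))]
      intro h'
      linarith
  have himg : ∀ k a b, 0 ≤ a → b ≤ 1 → ∀ q ∈ e k '' Ioo a b, f k q ∈ Ioo a b := by
    rintro k a b ha hb _ ⟨t, ht, rfl⟩
    rw [hfe k t ⟨ha.trans ht.1.le, ht.2.le.trans hb⟩]
    exact ht
  have hloc : ∀ q, ∃ ε : ℝ → Q, Topology.IsOpenEmbedding ε ∧ q ∈ range ε ∧ InjOn G (range ε) := by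
    intro q
    by_cases hqz : q = z
    · subst hqz
      obtain ⟨ε, hε, hεr⟩ := exists_subinterval (he k0) (zero_lt_one (α := ℝ))
      refine ⟨ε, hε, by rw [hεr]; exact ⟨_, hk0, (hef k0 q hk0).symm⟩, ?_⟩
      have key : ∀ x ∈ range ε, ∀ y ∈ range ε, f k0 x < f k0 y → G x ≠ G y := by
        intro x hx y hy hxy
        rw [hεr] at hx hy
        have hx := himg k0 0 1 le_rfl le_rfl x hx
        have hy := himg k0 0 1 le_rfl le_rfl y hy
        rcases lt_trichotomy (f k0 x) (f k0 q) with h | h | h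
        · rcases lt_trichotomy (f k0 y) (f k0 q) with h' | h' | h'
          · exact (hne k0 y x hy (mem_uIcc.2 (Or.inr ⟨hxy.le, h'.le⟩)) hxy.ne' h'.ne).symm
          · have : 0 < D x := hDz ▸ hDlt k0 q x hk0 left_mem_uIcc h.ne'
            simp only [hG, if_pos h'.ge, if_neg (not_le.2 h)]
            linarith [hDnn y]
          · have : 0 < D x := hDz ▸ hDlt k0 q x hk0 left_mem_uIcc h.ne'
            simp only [hG, if_pos h'.le, if_neg (not_le.2 h)]
            linarith [hDnn y]
        · have hx' : q = x := hinj k0 q x hk0 h.symm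
          subst hx'
          have : 0 < D y := hDz ▸ hDlt k0 q y hk0 left_mem_uIcc hxy.ne
          simp only [hG, if_pos hxy.le, le_refl, if_true, hDz]
          exact this.ne
        · exact hne k0 x y hx (mem_uIcc.2 (Or.inl ⟨h.le, hxy.le⟩)) hxy.ne h.ne'
      intro x hx y hy hxy
      by_contra hcon
      have hx' := himg k0 0 1 le_rfl le_rfl x (hεr ▸ hx)
      rcases lt_trichotomy (f k0 x) (f k0 y) with h | h | h
      · exact key x hx y hy h hxy
      · exact hcon (hinj k0 x y hx' h)
      · exact key y hy x hx h hxy.symm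
    · obtain ⟨k, hk⟩ := hcov q
      rcases lt_trichotomy (f k q) (f k z) with h | h | h
      · obtain ⟨ε, hε, hεr⟩ := exists_subinterval (he k) (hk.1.trans h)
        refine ⟨ε, hε, by rw [hεr]; exact ⟨_, ⟨hk.1, h⟩, (hef k q hk).symm⟩, ?_⟩
        have key : ∀ x ∈ range ε, ∀ y ∈ range ε, f k x < f k y → G x ≠ G y := by
          intro x hx y hy hxy
          rw [hεr] at hx hy
          have hx := himg k _ _ le_rfl (hr k z).2 x hx
          have hy := himg k _ _ le_rfl (hr k z).2 y hy
          exact (hne k y x ⟨hy.1, hy.2.trans_le (hr k z).2⟩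
            (mem_uIcc.2 (Or.inr ⟨hxy.le, hy.2.le⟩)) hxy.ne' hy.2.ne).symm
        intro x hx y hy hxy
        by_contra hcon
        have hx' := himg k _ _ le_rfl (hr k z).2 x (hεr ▸ hx)
        rcases lt_trichotomy (f k x) (f k y) with h | h | h
        · exact key x hx y hy h hxy
        · exact hcon (hinj k x y ⟨hx'.1, hx'.2.trans_le (hr k z).2⟩ h)
        · exact key y hy x hx h hxy.symm
      · exact absurd (hinj k q z hk h) hqz
      · obtain ⟨ε, hε, hεr⟩ := exists_subinterval (he k) (h.trans hk.2)
        refine ⟨ε, hε, by rw [hεr]; exact ⟨_, ⟨h, hk.2⟩, (hef k q hk).symm⟩, ?_⟩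
        have key : ∀ x ∈ range ε, ∀ y ∈ range ε, f k x < f k y → G x ≠ G y := by
          intro x hx y hy hxy
          rw [hεr] at hx hy
          have hx := himg k _ _ (hr k z).1 le_rfl x hx
          have hy := himg k _ _ (hr k z).1 le_rfl y hy
          exact hne k x y ⟨(hr k z).1.trans_lt hx.1, hx.2⟩
            (mem_uIcc.2 (Or.inl ⟨hx.1.le, hxy.le⟩)) hxy.ne hx.1.ne'
        intro x hx y hy hxy
        by_contra hcon
        have hx' := himg k _ _ (hr k z).1 le_rfl x (hεr ▸ hx)
        rcases lt_trichotomy (f k x) (f k y) with h | h | h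
        · exact key x hx y hy h hxy
        · exact hcon (hinj k x y ⟨(hr k z).1.trans_lt hx'.1, hx'.2⟩ h)
        · exact key y hy x hx h hxy.symm
  have hGo : IsOpenMap G := by
    refine IsOpenMap.of_nhds_le fun q => ?_
    obtain ⟨ε, hε, ⟨t, rfl⟩, hi⟩ := hloc q
    have h1 : IsOpenMap (G ∘ ε) := real_isOpenMap (hGc.comp hε.continuous)
      (fun a b hab => hε.injective (hi (mem_range_self a) (mem_range_self b) hab))
    have h2 := h1.nhds_le t
    rw [← Filter.map_map, hε.map_nhds_eq] at h2
    exact h2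
  have hGi : Function.Injective G := by
    refine inj_of_local hGc hGo fun q => ?_
    obtain ⟨ε, hε, hq, hi⟩ := hloc q
    exact ⟨range ε, hε.isOpen_range, isPreconnected_range hε.continuous, hq, hi⟩
  have hGe : Topology.IsOpenEmbedding G :=
    Topology.IsOpenEmbedding.of_continuous_injective_isOpenMap hGc hGi hGo
  have hGb : ∀ q, |G q| ≤ 2 := by
    intro q
    simp only [hG]
    split_ifs
    · rw [abs_of_nonneg (hDnn q)]; exact hDle q
    · rw [abs_neg, abs_of_nonneg (hDnn q)]; exact hDle q
  have hbb : BddBelow (range G) := ⟨-2, by rintro _ ⟨q, rfl⟩; exact (abs_le.1 (hGb q)).1⟩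
  have hba : BddAbove (range G) := ⟨2, by rintro _ ⟨q, rfl⟩; exact (abs_le.1 (hGb q)).2⟩
  have hrange : range G = Ioo (sInf (range G)) (sSup (range G)) := by
    apply Subset.antisymm
    · rw [← interior_Icc]
      exact interior_maximal (subset_Icc_csInf_csSup hbb hba) hGe.isOpen_range
    · exact (isConnected_range hGc).Ioo_csInf_csSup_subset hbb hba
  have hlt : sInf (range G) < sSup (range G) := by
    have : (range G).Nonempty := range_nonempty G
    rw [hrange] at this
    exact nonempty_Ioo.1 this
  obtain ⟨ε, hε, hεr⟩ := exists_subinterval (Topology.IsOpenEmbedding.id (X := ℝ)) hlt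
  rw [image_id, ← hrange] at hεr
  exact ⟨(hGe.isEmbedding.toHomeomorph.trans (Homeomorph.setCongr hεr.symm)).trans
    hε.isEmbedding.toHomeomorph.symm⟩

end FolAux
namespace FolAux

lemma real_isom {g : ℝ → ℝ} (hg : ∀ s t, |g s - g t| = |s - t|) :
    ∃ σ : ℝ, (σ = 1 ∨ σ = -1) ∧ ∀ t, g t = σ * t + g 0 := by
  have h1 := hg 1 0
  have key : ∀ σ : ℝ, (σ = 1 ∨ σ = -1) → g 1 - g 0 = σ → ∀ t, g t = σ * t + g 0 := by
    intro σ hσ hs t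
    have e1 : (g t - g 0) ^ 2 = (t - 0) ^ 2 := by
      rw [← sq_abs, hg, sq_abs]
    have e2 : (g t - g 1) ^ 2 = (t - 1) ^ 2 := by
      rw [← sq_abs, hg, sq_abs]
    have hg1 : g 1 = g 0 + σ := by linarith
    rw [hg1] at e2
    rcases hσ with rfl | rfl <;> nlinarith
  rcases abs_eq (a := g 1 - g 0) (b := 1) zero_le_one |>.1 (by rw [h1]; norm_num) with h | h
  · exact ⟨1, Or.inl rfl, key 1 (Or.inl rfl) h⟩
  · exact ⟨-1, Or.inr rfl, key (-1) (Or.inr rfl) h⟩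

section glue
variable {X : Type} [MetricSpace X]

def Good (p : X → ℝ) (u : X → ℝ) (a b : ℝ) : Prop :=
  ContinuousOn u (p ⁻¹' Icc a b) ∧
    ∀ x y, p x ∈ Icc a b → p x = p y → |u x - u y| = dist x y

lemma Good.mono {p u : X → ℝ} {a b a' b' : ℝ} (h : Good p u a b) (ha : a ≤ a') (hb : b' ≤ b) :
    Good p u a' b' :=
  ⟨h.1.mono (preimage_mono (Icc_subset_Icc ha hb)),
    fun x y hx => h.2 x y (Icc_subset_Icc ha hb hx)⟩

lemma Good.neg {p u : X → ℝ} {a b : ℝ} (h : Good p u a b) : Good (fun x => - p x) u (-b) (-a) := by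
  refine ⟨h.1.mono ?_, fun x y hx hxy => h.2 x y ?_ (neg_injective hxy)⟩
  · intro x hx
    simp only [mem_preimage, mem_Icc] at hx ⊢
    constructor <;> linarith [hx.1, hx.2]
  · simp only [mem_Icc] at hx ⊢
    constructor <;> linarith [hx.1, hx.2]

def FibLines (p : X → ℝ) : Prop := ∀ c, ∃ γ : ℝ → X, IsLine γ ∧ range γ = p ⁻¹' {c}

lemma FibLines.neg {p : X → ℝ} (h : FibLines p) : FibLines (fun x => - p x) := by
  intro c
  obtain ⟨γ, hγ, hr⟩ := h (-c)
  refine ⟨γ, hγ, ?_⟩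
  rw [hr]
  ext x
  simp only [mem_preimage, mem_singleton_iff]
  constructor <;> intro h <;> linarith

lemma glue_right {p : X → ℝ} (hp : Continuous p) (hl : FibLines p) {u₁ u₂ : X → ℝ} {a b c : ℝ}
    (hab : a ≤ b) (hbc : b ≤ c) (h₁ : Good p u₁ a b) (h₂ : Good p u₂ b c) :
    ∃ u, Good p u a c ∧ ∀ z, p z ≤ b → u z = u₁ z := by
  obtain ⟨γ, hγ, hr⟩ := hl b
  have hpγ : ∀ t, p (γ t) = b := fun t => by
    have : γ t ∈ p ⁻¹' {b} := hr ▸ mem_range_self t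
    simpa using this
  obtain ⟨σ₁, hσ₁, e₁⟩ := real_isom (g := fun t => u₁ (γ t)) (fun s t => by
    rw [h₁.2 _ _ (by rw [hpγ]; exact ⟨hab, le_rfl⟩) (by rw [hpγ, hpγ]), hγ s t])
  obtain ⟨σ₂, hσ₂, e₂⟩ := real_isom (g := fun t => u₂ (γ t)) (fun s t => by
    rw [h₂.2 _ _ (by rw [hpγ]; exact ⟨le_rfl, hbc⟩) (by rw [hpγ, hpγ]), hγ s t])
  have hσσ : |σ₁ * σ₂| = 1 := by
    rcases hσ₁ with rfl | rfl <;> rcases hσ₂ with rfl | rfl <;> norm_num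
  have hσ2 : σ₂ * σ₂ = 1 := by
    rcases hσ₂ with rfl | rfl <;> norm_num
  set v : X → ℝ := fun z => σ₁ * σ₂ * (u₂ z - u₂ (γ 0)) + u₁ (γ 0) with hv
  have hvb : ∀ z, p z = b → v z = u₁ z := by
    intro z hz
    have : z ∈ range γ := by rw [hr]; exact hz
    obtain ⟨t, rfl⟩ := this
    have E₁ := e₁ t
    have E₂ := e₂ t
    simp only [hv]
    rw [E₁, E₂]
    linear_combination σ₁ * t * hσ2
  have hvg : Good p v b c := by
    refine ⟨((h₂.1.sub continuousOn_const).const_smul (σ₁ * σ₂)).add continuousOn_const, ?_⟩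
    intro x y hx hxy
    rw [← h₂.2 x y hx hxy]
    have : v x - v y = σ₁ * σ₂ * (u₂ x - u₂ y) := by simp only [hv]; ring
    rw [this, abs_mul, hσσ, one_mul]
  classical
  refine ⟨fun z => if p z ≤ b then u₁ z else v z, ⟨?_, ?_⟩, fun z hz => if_pos hz⟩
  · have hA : ContinuousOn (fun z => if p z ≤ b then u₁ z else v z) (p ⁻¹' Icc a b) :=
      h₁.1.congr fun z hz => if_pos hz.2
    have hB : ContinuousOn (fun z => if p z ≤ b then u₁ z else v z) (p ⁻¹' Icc b c) := by
      refine hvg.1.congr fun z hz => ?_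
      by_cases h : p z ≤ b
      · simp only [if_pos h]
        exact (hvb z (le_antisymm h hz.1)).symm
      · simp only [if_neg h]
    have := hA.union_of_isClosed hB (isClosed_Icc.preimage hp) (isClosed_Icc.preimage hp)
    rwa [← preimage_union, Icc_union_Icc_eq_Icc hab hbc] at this
  · intro x y hx hxy
    by_cases h : p x ≤ b
    · have h' : p y ≤ b := hxy ▸ h
      simp only [if_pos h, if_pos h']
      exact h₁.2 x y ⟨hx.1, h⟩ hxy
    · have h' : ¬ p y ≤ b := hxy ▸ h
      simp only [if_neg h, if_neg h']
      exact hvg.2 x y ⟨(not_le.1 h).le, hx.2⟩ hxy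

lemma glue_left {p : X → ℝ} (hp : Continuous p) (hl : FibLines p) {u₁ u₂ : X → ℝ} {a b c : ℝ}
    (hab : a ≤ b) (hbc : b ≤ c) (h₁ : Good p u₁ a b) (h₂ : Good p u₂ b c) :
    ∃ u, Good p u a c ∧ ∀ z, b ≤ p z → u z = u₂ z := by
  obtain ⟨u, hu, he⟩ := glue_right hp.neg hl.neg (neg_le_neg hbc) (neg_le_neg hab) h₂.neg h₁.neg
  refine ⟨u, ?_, fun z hz => he z (neg_le_neg hz)⟩
  have := hu.neg
  simpa only [Pi.neg_apply, neg_neg] using this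

lemma good_Icc {p : X → ℝ} (hp : Continuous p) (hl : FibLines p)
    (hloc : ∀ c, ∃ ε > 0, ∃ u, Good p u (c - ε) (c + ε)) {a b : ℝ} (hab : a ≤ b) :
    ∃ u, Good p u a b := by
  choose ε hε w hw using hloc
  obtain ⟨t, ht0, htm, ⟨m, hm⟩, hc⟩ := exists_monotone_Icc_subset_open_cover_Icc hab
    (c := fun i : ℝ => {s : Icc a b | (s : ℝ) ∈ Ioo (i - ε i) (i + ε i)})
    (fun i => isOpen_Ioo.preimage continuous_subtype_val)
    (fun s _ => mem_iUnion.2 ⟨s, by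
      have := hε s
      constructor <;> linarith⟩)
  have hstep : ∀ n, ∃ u, Good p u (t n) (t (n + 1)) := by
    intro n
    obtain ⟨i, hi⟩ := hc n
    have hle : t n ≤ t (n + 1) := htm n.le_succ
    have h1 : (t n : ℝ) ∈ Ioo (i - ε i) (i + ε i) := hi ⟨le_rfl, hle⟩
    have h2 : (t (n + 1) : ℝ) ∈ Ioo (i - ε i) (i + ε i) := hi ⟨hle, le_rfl⟩
    exact ⟨w i, (hw i).mono h1.1.le h2.2.le⟩
  have hall : ∀ n, ∃ u, Good p u (t 0) (t (n + 1)) := by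
    intro n
    induction n with
    | zero => exact hstep 0
    | succ n ih =>
      obtain ⟨u, hu⟩ := ih
      obtain ⟨v, hv⟩ := hstep (n + 1)
      obtain ⟨z, hz, -⟩ := glue_right hp hl (htm (Nat.zero_le (n + 1))) (htm (n + 1).le_succ) hu hv
      exact ⟨z, hz⟩
  obtain ⟨u, hu⟩ := hall m
  rw [ht0, hm (m + 1) (Nat.le_succ m)] at hu
  exact ⟨u, hu⟩

lemma good_global {p : X → ℝ} (hp : Continuous p) (hl : FibLines p)
    (hloc : ∀ c, ∃ ε > 0, ∃ u, Good p u (c - ε) (c + ε)) :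
    ∃ u : X → ℝ, Continuous u ∧ ∀ x y, p x = p y → |u x - u y| = dist x y := by
  have hstep : ∀ (n : ℕ) (u : X → ℝ), Good p u (-n) n → ∃ v, Good p v (-(n + 1 : ℕ)) (n + 1 : ℕ) ∧
      ∀ z, |p z| ≤ n → v z = u z := by
    intro n u hu
    have hn : (-n : ℝ) ≤ n := by have : (0 : ℝ) ≤ n := n.cast_nonneg; linarith
    have hn1 : (n : ℝ) ≤ (n + 1 : ℕ) := by push_cast; linarith
    have hn2 : -((n + 1 : ℕ) : ℝ) ≤ -n := by push_cast; linarith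
    obtain ⟨a, ha⟩ := good_Icc hp hl hloc hn1
    obtain ⟨b, hb⟩ := good_Icc hp hl hloc hn2
    obtain ⟨v, hv, hvu⟩ := glue_right hp hl hn hn1 hu ha
    obtain ⟨w, hw, hwv⟩ := glue_left hp hl hn2 (hn.trans hn1) hb hv
    refine ⟨w, hw, fun z hz => ?_⟩
    rw [abs_le] at hz
    rw [hwv z hz.1, hvu z hz.2]
  choose! st hst1 hst2 using hstep
  obtain ⟨u0, hu0⟩ := good_Icc hp hl hloc (a := -(0 : ℕ)) (b := (0 : ℕ)) (by simp)
  let s : ℕ → X → ℝ := fun n => Nat.rec u0 (fun n u => st n u) n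
  have hs : ∀ n, Good p (s n) (-n) n := by
    intro n
    induction n with
    | zero => exact hu0
    | succ n ih => exact hst1 n _ ih
  have hs1 : ∀ (n : ℕ) z, |p z| ≤ n → s (n + 1) z = s n z := fun n z hz => hst2 n _ (hs n) z hz
  have hs2 : ∀ n m : ℕ, n ≤ m → ∀ z, |p z| ≤ n → s m z = s n z := by
    intro n m hnm z hz
    induction m, hnm using Nat.le_induction with
    | base => rfl
    | succ m hm ih =>
      rw [hs1 m z (hz.trans (by exact_mod_cast hm)), ih]
  let u : X → ℝ := fun z => s ⌈|p z|⌉₊ z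
  have hu : ∀ (n : ℕ) z, |p z| ≤ n → u z = s n z := fun n z hz =>
    (hs2 _ n (Nat.ceil_le.2 hz) z (Nat.le_ceil _)).symm
  refine ⟨u, ?_, ?_⟩
  · rw [continuous_iff_continuousAt]
    intro x
    obtain ⟨n, hn⟩ := exists_nat_gt |p x|
    have hO : IsOpen {z | |p z| < n} := isOpen_lt hp.abs continuous_const
    have hmem : {z | |p z| < n} ∈ 𝓝 x := hO.mem_nhds hn
    have hc : ContinuousAt (s n) x := (hs n).1.continuousAt (Filter.mem_of_superset hmem
      (fun z hz => abs_le.1 (le_of_lt hz)))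
    refine hc.congr ?_
    filter_upwards [hmem] with z hz
    exact (hu n z (le_of_lt hz)).symm
  · intro x y hxy
    obtain ⟨n, hn⟩ := exists_nat_gt |p x|
    rw [hu n x hn.le, hu n y (hxy ▸ hn.le)]
    exact (hs n).2 x y (abs_le.1 hn.le) hxy

lemma good_local {p : X → ℝ} (hp : Continuous p) (hl : FibLines p)
    (hsec : ∀ x, ∃ τ : ℝ → X, Continuous τ ∧ τ 0 = x ∧ Topology.IsOpenEmbedding (fun t => p (τ t)))
    (c : ℝ) : ∃ ε > 0, ∃ u, Good p u (c - ε) (c + ε) := by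
  have hsec' : ∀ x, p x = c → ∃ s : ℝ → X, s c = x ∧ ∃ W ∈ 𝓝 c, ContinuousOn s W ∧
      ∀ t ∈ W, p (s t) = t := by
    intro x hx
    obtain ⟨τ, hτ, h0, he⟩ := hsec x
    let E := he.toOpenPartialHomeomorph
    have hEc : ∀ t, E t = p (τ t) := fun t => rfl
    have hs0 : E.symm c = 0 := by
      have := E.left_inv (x := 0) (by simp [E])
      rwa [hEc, h0, hx] at this
    refine ⟨fun t => τ (E.symm t), by simp only [hs0, h0], E.target, ?_, ?_, ?_⟩
    · refine E.open_target.mem_nhds ?_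
      have := E.map_source (x := 0) (by simp [E])
      rwa [hEc, h0, hx] at this
    · exact hτ.comp_continuousOn E.continuousOn_symm
    · intro t ht
      exact E.right_inv ht
  obtain ⟨γ, hγ, hr⟩ := hl c
  have hpγ : ∀ t, p (γ t) = c := fun t => by
    have : γ t ∈ p ⁻¹' {c} := hr ▸ mem_range_self t
    simpa using this
  obtain ⟨s, hsc, W, hW, hsW, hps⟩ := hsec' (γ 0) (hpγ 0)
  obtain ⟨s', hsc', W', hW', hsW', hps'⟩ := hsec' (γ 1) (hpγ 1)
  have hne : ∀ᶠ t in 𝓝 c, s t ≠ s' t := by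
    have hcp : ContinuousAt (fun t => (s t, s' t)) c :=
      (hsW.continuousAt hW).prodMk (hsW'.continuousAt hW')
    have hO : IsOpen {q : X × X | q.1 ≠ q.2} := isOpen_ne_fun continuous_fst continuous_snd
    refine hcp.eventually (hO.mem_nhds ?_)
    simp only [hsc, hsc']
    intro h
    simp only at h
    have := hγ 0 1
    rw [h] at this
    norm_num at this
  obtain ⟨ε, hε, hsub⟩ := nhds_basis_closedBall.mem_iff.1 (inter_mem (inter_mem hW hW') hne)
  rw [Real.closedBall_eq_Icc] at hsub
  refine ⟨ε, hε, fun z => (dist z (s (p z)) ^ 2 - dist z (s' (p z)) ^ 2) /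
    (2 * dist (s (p z)) (s' (p z))), ?_, ?_⟩
  · have hmp : MapsTo p (p ⁻¹' Icc (c - ε) (c + ε)) (Icc (c - ε) (c + ε)) := fun x hx => hx
    have c1 : ContinuousOn (fun z => s (p z)) (p ⁻¹' Icc (c - ε) (c + ε)) :=
      (hsW.mono fun t ht => (hsub ht).1.1).comp hp.continuousOn hmp
    have c2 : ContinuousOn (fun z => s' (p z)) (p ⁻¹' Icc (c - ε) (c + ε)) :=
      (hsW'.mono fun t ht => (hsub ht).1.2).comp hp.continuousOn hmp
    have d1 := (continuous_dist.comp_continuousOn (continuousOn_id.prodMk c1)).pow 2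
    have d2 := (continuous_dist.comp_continuousOn (continuousOn_id.prodMk c2)).pow 2
    refine ContinuousOn.div (d1.sub d2) (continuousOn_const.mul (continuous_dist.comp_continuousOn (c1.prodMk c2))) ?_
    intro z hz
    have : s (p z) ≠ s' (p z) := (hsub hz).2
    exact mul_ne_zero two_ne_zero (dist_ne_zero.2 this)
  · intro x y hx hxy
    simp only
    rw [← hxy]
    have hne : s (p x) ≠ s' (p x) := (hsub hx).2
    have hA := hps _ (hsub hx).1.1
    have hB := hps' _ (hsub hx).1.2
    obtain ⟨g, hg, hgr⟩ := hl (p x)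
    have hmem : ∀ z, p z = p x → ∃ t, g t = z := fun z hz => by
      have : z ∈ range g := by rw [hgr]; exact hz
      exact this
    obtain ⟨α, hα⟩ := hmem _ hA
    obtain ⟨β, hβ⟩ := hmem _ hB
    obtain ⟨t, ht⟩ := hmem x rfl
    obtain ⟨t', ht'⟩ := hmem y hxy.symm
    rw [← hα, ← hβ] at hne ⊢
    rw [← ht']
    nth_rewrite 1 [← ht]
    nth_rewrite 1 [← ht]
    nth_rewrite 1 [← ht]
    have hαβ : α - β ≠ 0 := fun h => hne (by rw [sub_eq_zero.1 h])
    simp only [hg _ _, sq_abs]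
    have hpos : 0 < |α - β| := abs_pos.2 hαβ
    have : ((t - α) ^ 2 - (t - β) ^ 2) / (2 * |α - β|) - ((t' - α) ^ 2 - (t' - β) ^ 2) / (2 * |α - β|)
      = (β - α) * (t - t') / |α - β| := by
      field_simp
      ring
    rw [this, abs_div, abs_mul, abs_abs, abs_sub_comm β α]
    field_simp

/-- a fibration by lines over the real line is trivial -/
lemma trivialize {p : X → ℝ} (hp : Continuous p) (hpo : IsOpenMap p) (hl : FibLines p)
    (hsec : ∀ x, ∃ τ : ℝ → X, Continuous τ ∧ τ 0 = x ∧
      Topology.IsOpenEmbedding (fun t => p (τ t))) :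
    ∃ h : X ≃ₜ (ℝ × ℝ), ∀ x, (h x).2 = p x := by
  obtain ⟨u, hu, hd⟩ := good_global hp hl (good_local hp hl hsec)
  let H : X → ℝ × ℝ := fun x => (u x, p x)
  have hH : Continuous H := hu.prodMk hp
  have hinj : Function.Injective H := by
    intro x y hxy
    have h1 : u x = u y := congrArg Prod.fst hxy
    have h2 : p x = p y := congrArg Prod.snd hxy
    have := hd x y h2
    rw [h1, sub_self, abs_zero] at this
    exact dist_eq_zero.1 this.symm
  have hsurj : Function.Surjective H := by
    rintro ⟨a, c⟩
    obtain ⟨γ, hγ, hr⟩ := hl c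
    have hpγ : ∀ t, p (γ t) = c := fun t => by
      have : γ t ∈ p ⁻¹' {c} := hr ▸ mem_range_self t
      simpa using this
    obtain ⟨σ, hσ, e⟩ := real_isom (g := fun t => u (γ t)) (fun s t => by
      rw [hd _ _ (by rw [hpγ, hpγ]), hγ s t])
    refine ⟨γ (σ * (a - u (γ 0))), Prod.ext ?_ (hpγ _)⟩
    have := e (σ * (a - u (γ 0)))
    simp only [H]
    rw [this]
    rcases hσ with rfl | rfl <;> ring
  have hopen : IsOpenMap H := by
    rw [isOpenMap_iff_nhds_le]
    intro x s hs
    rw [Filter.mem_map] at hs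
    obtain ⟨ε, hε, hsub⟩ := Metric.mem_nhds_iff.1 hs
    have hε3 : 0 < ε / 3 := by linarith
    let V : Set X := ball x (ε / 3) ∩ {z | |u z - u x| < ε / 3}
    have hV : IsOpen V := isOpen_ball.inter (isOpen_lt (hu.sub continuous_const).abs continuous_const)
    have hxV : x ∈ V := ⟨mem_ball_self hε3, by simpa using hε3⟩
    have hN : (ball (u x) (ε / 3)) ×ˢ (p '' V) ∈ 𝓝 (H x) :=
      prod_mem_nhds (ball_mem_nhds _ hε3) ((hpo V hV).mem_nhds ⟨x, hxV, rfl⟩)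
    refine Filter.mem_of_superset hN ?_
    rintro q ⟨hq1, y, hy, hq2⟩
    obtain ⟨z, rfl⟩ := hsurj q
    apply hsub
    have h1 : |u z - u x| < ε / 3 := by simpa [H, Real.dist_eq] using hq1
    have h2 : p z = p y := hq2.symm
    have h3 : dist z y < 2 * (ε / 3) := by
      rw [← hd z y h2]
      have h4 : |u y - u x| < ε / 3 := hy.2
      rw [abs_lt] at h1 h4 ⊢
      constructor <;> linarith [h1.1, h1.2, h4.1, h4.2]
    have h5 : dist y x < ε / 3 := hy.1
    rw [mem_ball]
    linarith [dist_triangle z y x]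
  exact ⟨(Equiv.ofBijective H ⟨hinj, hsurj⟩).toHomeomorphOfContinuousOpen hH hopen, fun x => rfl⟩

end glue

lemma main_aux {X : Type} [MetricSpace X] (h0 : X ≃ₜ (ℝ × ℝ)) (r : Setoid X)
    (hl : HLines r) (hch : HCharts r) :
    ∃ h : X ≃ₜ (ℝ × ℝ), ∀ x y, r x y ↔ (h x).2 = (h y).2 := by
  have : SimplyConnectedSpace X := h0.toHomotopyEquiv.simplyConnectedSpace
  have : LocallyPathConnectedSpace X := h0.symm.isQuotientMap.locallyPathConnectedSpace
  have : SecondCountableTopology X := h0.secondCountableTopology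
  have : T2Space (Quotient r) := quot_t2 hl hch
  have hopen : IsOpenMap (Quotient.mk r) := mk_isOpenMap hl hch
  have hcont : Continuous (Quotient.mk r) := continuous_quotient_mk'
  have hqm : Topology.IsQuotientMap (Quotient.mk r) := isQuotientMap_quotient_mk'
  have : ConnectedSpace (Quotient r) := inferInstance
  have hclass : ∀ x, ∃ γ : ℝ → X, IsLine γ ∧ range γ = Quotient.mk r ⁻¹' {Quotient.mk r x} := by
    intro x
    obtain ⟨γ, hγ, hr⟩ := hl x
    refine ⟨γ, hγ, ?_⟩
    rw [hr]
    ext y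
    simp only [mem_preimage, mem_singleton_iff]
    exact ⟨fun h => (Quotient.sound h).symm, fun h => Quotient.exact h.symm⟩
  have hfib : ∀ q, IsPreconnected (Quotient.mk r ⁻¹' {q}) := by
    intro q
    obtain ⟨x, rfl⟩ := Quotient.exists_rep q
    obtain ⟨γ, hγ, hr⟩ := hclass x
    rw [← hr]
    exact isPreconnected_range (IsLine.isometry hγ).continuous
  have hloc : ∀ x : X, ∃ (e : ℝ → Quotient r) (f : Quotient r → ℝ), Topology.IsOpenEmbedding e ∧
      Continuous f ∧ (∀ q, f q ∈ Icc (0 : ℝ) 1) ∧ (∀ t ∈ Icc (0 : ℝ) 1, f (e t) = t) ∧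
      (∀ q, f q ∈ Ioo (0 : ℝ) 1 → q = e (f q)) ∧ f (Quotient.mk r x) ∈ Ioo (0 : ℝ) 1 := by
    intro x
    obtain ⟨τ, hτ, hτ0, he⟩ := exists_transversal hl hch x
    have he' := he.comp (Homeomorph.subRight (1 / 2 : ℝ)).isOpenEmbedding
    obtain ⟨f, hf, h1, h2, h3⟩ := exists_step hqm hfib he'
    refine ⟨_, f, he', hf, h1, h2, h3, ?_⟩
    have := h2 (1 / 2) (by norm_num)
    have e0 : (Homeomorph.subRight (1 / 2 : ℝ)) (1 / 2) = 0 := sub_self (1 / 2 : ℝ)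
    simp only [Function.comp, e0, hτ0] at this
    rw [this]
    norm_num
  choose e f he hf hr1 hfe hef hx using hloc
  obtain ⟨C, hCc, hCU⟩ := TopologicalSpace.countable_cover_nhds
    (f := fun x : X => {y | f x (Quotient.mk r y) ∈ Ioo (0 : ℝ) 1})
    (fun x => (isOpen_Ioo.preimage ((hf x).comp hcont)).mem_nhds (hx x))
  have hCne : C.Nonempty := by
    have : h0.symm (0, 0) ∈ ⋃ x ∈ C, {y | f x (Quotient.mk r y) ∈ Ioo (0 : ℝ) 1} := by
      rw [hCU]; trivial
    simp only [mem_iUnion] at this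
    obtain ⟨x, hxC, -⟩ := this
    exact ⟨x, hxC⟩
  obtain ⟨k, hk⟩ := hCc.exists_eq_range hCne
  obtain ⟨θ⟩ := quot_real (fun n => f (k n)) (fun n => e (k n)) (fun n => he (k n)) (fun n => hf (k n))
    (fun n => hr1 (k n)) (fun n => hfe (k n)) (fun n => hef (k n)) (by
      intro q
      obtain ⟨y, rfl⟩ := Quotient.exists_rep q
      have : y ∈ ⋃ x ∈ C, {y | f x (Quotient.mk r y) ∈ Ioo (0 : ℝ) 1} := by
        rw [hCU]; trivial
      simp only [mem_iUnion] at this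
      obtain ⟨x, hxC, h⟩ := this
      rw [hk] at hxC
      obtain ⟨n, rfl⟩ := hxC
      exact ⟨n, h⟩)
  obtain ⟨h, hh⟩ := trivialize (p := fun x => θ (Quotient.mk r x)) (θ.continuous.comp hcont)
    (θ.isOpenMap.comp hopen) (by
      intro c
      obtain ⟨x, hx⟩ := Quotient.exists_rep (θ.symm c)
      obtain ⟨γ, hγ, hr⟩ := hclass x
      refine ⟨γ, hγ, ?_⟩
      rw [hr, hx]
      ext y
      simp only [mem_preimage, mem_singleton_iff]
      exact (Homeomorph.eq_symm_apply θ)) (by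
      intro x
      obtain ⟨τ, hτ, hτ0, he⟩ := exists_transversal hl hch x
      exact ⟨τ, hτ, hτ0, θ.isOpenEmbedding.comp he⟩)
  refine ⟨h, fun x y => ?_⟩
  rw [hh, hh]
  exact ⟨fun hxy => congrArg θ (Quotient.sound hxy), fun hxy => Quotient.exact (θ.injective hxy)⟩

end FolAux

/-- Let `(M², g)` be a complete Riemannian surface homeomorphic to
`ℝ²`, and let `F` be a foliation of `M` all of whose leaves are geodesic lines. Then
`F` is homeomorphic to the standard foliation of the Euclidean plane by parallel
straight lines: there is a homeomorphism of `M` onto `ℝ²` carrying each leaf of `F`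
to a horizontal straight line. -/
theorem foliation_homeomorphic_standard
    (S : RiemannianSurface)
    (hplane : Nonempty (S.M ≃ₜ (ℝ × ℝ)))
    (F : GeodesicLineFoliation S) :
    ∃ h : S.M ≃ₜ (ℝ × ℝ), ∀ L ∈ F.leaves, ∃ c : ℝ,
      (h : S.M → ℝ × ℝ) '' L = {q : ℝ × ℝ | q.2 = c} := by
  obtain ⟨h0⟩ := hplane
  let r : Setoid S.M :=
    { r := fun x y => ∃ L ∈ F.leaves, x ∈ L ∧ y ∈ L
      iseqv :=
        { refl := fun x => by
            obtain ⟨L, hL, hx⟩ := F.covers x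
            exact ⟨L, hL, hx, hx⟩
          symm := fun ⟨L, hL, hx, hy⟩ => ⟨L, hL, hy, hx⟩
          trans := fun ⟨L, hL, hx, hy⟩ ⟨L', hL', hy', hz⟩ => by
            have := F.eq_of_inter L hL L' hL' ⟨_, hy, hy'⟩
            subst this
            exact ⟨L, hL, hx, hz⟩ } }
  have hrel : ∀ L ∈ F.leaves, ∀ x ∈ L, ∀ y, r x y ↔ y ∈ L := by
    intro L hL x hx y
    constructor
    · rintro ⟨L', hL', hx', hy'⟩
      rw [F.eq_of_inter L hL L' hL' ⟨x, hx, hx'⟩]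
      exact hy'
    · intro hy
      exact ⟨L, hL, hx, hy⟩
  have hl : FolAux.HLines r := by
    intro x
    obtain ⟨L, hL, hx⟩ := F.covers x
    obtain ⟨γ, hγ, -, hr⟩ := F.leaf_is_geodesic_line L hL
    refine ⟨γ, hγ, ?_⟩
    rw [hr]
    ext y
    exact (hrel L hL x hx y).symm
  have hch : FolAux.HCharts r := by
    intro x
    obtain ⟨U, hU, hx, φ, hφ⟩ := F.locally_trivial x
    refine ⟨U, hU, hx, φ, fun c t t' => ?_⟩
    obtain ⟨L, hL, h⟩ := hφ c
    exact ⟨L, hL, h t, h t'⟩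
  obtain ⟨h, hh⟩ := FolAux.main_aux h0 r hl hch
  refine ⟨h, fun L hL => ?_⟩
  obtain ⟨γ, -, -, hr⟩ := F.leaf_is_geodesic_line L hL
  have hx : γ 0 ∈ L := hr ▸ mem_range_self 0
  refine ⟨(h (γ 0)).2, ?_⟩
  ext q
  constructor
  · rintro ⟨y, hy, rfl⟩
    exact ((hh _ _).1 ((hrel L hL _ hx y).2 hy)).symm
  · intro hq
    have hq' : q.2 = (h (γ 0)).2 := hq
    refine ⟨h.symm q, ?_, h.apply_symm_apply q⟩
    refine (hrel L hL _ hx _).1 ((hh _ _).2 ?_)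
    rw [h.apply_symm_apply, hq']
end

section
/- Let F be a geodesic line foliation of a complete Riemannian plane M. Let σ₁ and σ₃ be two leaves of F, let p be an interior point of the strip S_{σ₁}^{σ₃}, and let σ₂ be the leaf of F passing through p. Then σ₂ separates the strip: S_{σ₁}^{σ₂} ∩ S_{σ₂}^{σ₃} = σ₂ and S_{σ₁}^{σ₃} = S_{σ₁}^{σ₂} ∪ S_{σ₂}^{σ₃}. -/
open Set Filter MeasureTheory Metric
open scoped ENNReal NNReal Topology

/-- The closed half-plane bounded by (the image of) a line `σ` and containing the
set `L` (disjoint from `σ`): the closure of the union of the connected components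
of the complement of `σ` meeting `L`. -/
def halfPlaneOf {X : Type} [MetricSpace X] (σ L : Set X) : Set X :=
  closure (⋃ x ∈ L, connectedComponentIn σᶜ x)

/-- The strip `S_γ^σ` bounded by two disjoint lines `σ` and `γ`: the intersection of
the closed half-plane bounded by `σ` containing `γ` with the closed half-plane
bounded by `γ` containing `σ`. -/
def stripBetween {X : Type} [MetricSpace X] (σ γ : Set X) : Set X :=
  halfPlaneOf σ γ ∩ halfPlaneOf γ σ


namespace LeafSep

/-- A foliated box. -/
def IsBox {X : Type} [MetricSpace X] (r : X → X → Prop) (ψ : ℝ × ℝ → X) : Prop :=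
  Topology.IsOpenEmbedding ψ ∧ ∀ p ∈ Metric.closedBall (0 : ℝ × ℝ) 1,
    ∀ q ∈ Metric.closedBall (0 : ℝ × ℝ) 1, (r (ψ p) (ψ q) ↔ p.2 = q.2)

/-- Topological data of a foliated plane with closed leaf relation. -/
structure Ctx (X : Type) [MetricSpace X] (r : X → X → Prop) : Prop where
  equiv : Equivalence r
  box : ∀ x : X, ∀ V ∈ 𝓝 x, ∃ ψ : ℝ × ℝ → X, IsBox r ψ ∧ ψ 0 = x ∧
    ψ '' Metric.closedBall 0 1 ⊆ V
  closed : IsClosed {p : X × X | r p.1 p.2}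
  conn : ∀ x, IsPreconnected {y | r x y}
  homeo : Nonempty (X ≃ₜ (ℝ × ℝ))

section box

variable {X : Type} [MetricSpace X] {r : X → X → Prop} {ψ : ℝ × ℝ → X}

lemma IsBox.flip (h : IsBox r ψ) : IsBox r (fun p => ψ (p.1, -p.2)) := by
  refine ⟨h.1.comp ((Homeomorph.refl ℝ).prodCongr (Homeomorph.neg ℝ)).isOpenEmbedding, ?_⟩
  intro p hp q hq
  rw [h.2 _ ?_ _ ?_]
  · simp
  · simpa [Prod.norm_def] using hp
  · simpa [Prod.norm_def] using hq

lemma mem_ball_iff (p : ℝ × ℝ) : p ∈ Metric.ball (0 : ℝ × ℝ) 1 ↔ |p.1| < 1 ∧ |p.2| < 1 := by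
  simp [Prod.norm_def]

lemma IsBox.iff (h : IsBox r ψ) {p q : ℝ × ℝ} (hp : p ∈ Metric.ball (0 : ℝ × ℝ) 1)
    (hq : q ∈ Metric.ball (0 : ℝ × ℝ) 1) : r (ψ p) (ψ q) ↔ p.2 = q.2 :=
  h.2 p (Metric.ball_subset_closedBall hp) q (Metric.ball_subset_closedBall hq)

lemma IsBox.upper_open (h : IsBox r ψ) (c : ℝ) :
    IsOpen (ψ '' {p | p ∈ Metric.ball (0 : ℝ × ℝ) 1 ∧ c < p.2}) :=
  h.1.isOpenMap _ (Metric.isOpen_ball.inter (isOpen_lt continuous_const continuous_snd))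

lemma IsBox.lower_open (h : IsBox r ψ) (c : ℝ) :
    IsOpen (ψ '' {p | p ∈ Metric.ball (0 : ℝ × ℝ) 1 ∧ p.2 < c}) :=
  h.1.isOpenMap _ (Metric.isOpen_ball.inter (isOpen_lt continuous_snd continuous_const))

lemma IsBox.upper_conn (h : IsBox r ψ) (c : ℝ) :
    IsPreconnected (ψ '' {p | p ∈ Metric.ball (0 : ℝ × ℝ) 1 ∧ c < p.2}) := by
  refine IsPreconnected.image ?_ _ h.1.continuous.continuousOn
  apply Convex.isPreconnected
  exact (convex_ball _ _).inter (convex_halfSpace_gt (LinearMap.snd ℝ ℝ ℝ).isLinear c)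

lemma IsBox.lower_conn (h : IsBox r ψ) (c : ℝ) :
    IsPreconnected (ψ '' {p | p ∈ Metric.ball (0 : ℝ × ℝ) 1 ∧ p.2 < c}) := by
  refine IsPreconnected.image ?_ _ h.1.continuous.continuousOn
  apply Convex.isPreconnected
  exact (convex_ball _ _).inter (convex_halfSpace_lt (LinearMap.snd ℝ ℝ ℝ).isLinear c)

lemma IsBox.open_ball (h : IsBox r ψ) : IsOpen (ψ '' Metric.ball (0 : ℝ × ℝ) 1) :=
  h.1.isOpenMap _ Metric.isOpen_ball

/-- points just above -/
lemma IsBox.freq_upper (h : IsBox r ψ) {p : ℝ × ℝ} (hp : p ∈ Metric.ball (0 : ℝ × ℝ) 1) :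
    ∃ᶠ x in 𝓝 (ψ p), x ∈ ψ '' {q | q ∈ Metric.ball (0 : ℝ × ℝ) 1 ∧ p.2 < q.2} := by
  have hc : Continuous (fun t : ℝ => ((p.1, p.2 + t) : ℝ × ℝ)) := by fun_prop
  have h1 : Tendsto (fun t : ℝ => ((p.1, p.2 + t) : ℝ × ℝ)) (𝓝[>] 0) (𝓝 p) := by
    have := hc.tendsto 0
    simp only [add_zero] at this
    exact this.mono_left nhdsWithin_le_nhds
  have h2 := (h.1.continuous.tendsto p).comp h1
  refine h2.frequently (Eventually.frequently ?_)
  filter_upwards [h1 (Metric.isOpen_ball.mem_nhds hp), self_mem_nhdsWithin] with t ht ht0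
  exact ⟨_, ⟨ht, by simpa using ht0⟩, rfl⟩

lemma IsBox.freq_lower (h : IsBox r ψ) {p : ℝ × ℝ} (hp : p ∈ Metric.ball (0 : ℝ × ℝ) 1) :
    ∃ᶠ x in 𝓝 (ψ p), x ∈ ψ '' {q | q ∈ Metric.ball (0 : ℝ × ℝ) 1 ∧ q.2 < p.2} := by
  have hc : Continuous (fun t : ℝ => ((p.1, p.2 + t) : ℝ × ℝ)) := by fun_prop
  have h1 : Tendsto (fun t : ℝ => ((p.1, p.2 + t) : ℝ × ℝ)) (𝓝[<] 0) (𝓝 p) := by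
    have := hc.tendsto 0
    simp only [add_zero] at this
    exact this.mono_left nhdsWithin_le_nhds
  have h2 := (h.1.continuous.tendsto p).comp h1
  refine h2.frequently (Eventually.frequently ?_)
  filter_upwards [h1 (Metric.isOpen_ball.mem_nhds hp), self_mem_nhdsWithin] with t ht ht0
  exact ⟨_, ⟨ht, by simpa using ht0⟩, rfl⟩

end box

section good

variable {X : Type} [MetricSpace X]

/-- `s` is locally constant off `L` at `x`, and changes value across `L` at `x`. -/
def Gd (L : Set X) (s : X → Bool) (x : X) : Prop :=
  (x ∉ L → ∀ᶠ y in 𝓝 x, s y = s x) ∧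
  (x ∈ L → ∀ b : Bool, ∃ᶠ y in 𝓝 x, y ∉ L ∧ s y = b)

/-- Good near `x`. -/
def Gn (L : Set X) (s : X → Bool) (x : X) : Prop := ∀ᶠ y in 𝓝 x, Gd L s y

lemma const_of_locConst {s : X → Bool} {K : Set X} (hK : IsPreconnected K)
    (h : ∀ x ∈ K, ∀ᶠ y in 𝓝 x, s y = s x) {x y : X} (hx : x ∈ K) (hy : y ∈ K) : s x = s y := by
  refine hK.constant (fun z hz => ContinuousAt.continuousWithinAt ?_) hx hy
  exact (continuousAt_const (y := s z)).congr ((h z hz).mono fun w hw => hw.symm)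

lemma Gd.congr {L : Set X} {s s' : X → Bool} {x : X} (ε : Bool)
    (h : ∀ᶠ y in 𝓝 x, y ∉ L → s' y = (s y ^^ ε)) (hL : IsClosed L) (hs : Gd L s x) :
    Gd L s' x := by
  refine ⟨fun hx => ?_, fun hx b => ?_⟩
  · have hxx := h.self_of_nhds hx
    filter_upwards [hs.1 hx, h, hL.isOpen_compl.mem_nhds hx] with y h1 h2 h3
    rw [h2 h3, hxx, h1]
  · refine ((hs.2 hx (b ^^ ε)).and_eventually h).mono ?_
    rintro y ⟨⟨h1, h2⟩, h3⟩
    refine ⟨h1, ?_⟩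
    rw [h3 h1, h2]
    cases b <;> cases ε <;> rfl

lemma Gn.congr {L : Set X} {s s' : X → Bool} {x : X} (ε : Bool)
    (h : ∀ᶠ y in 𝓝 x, y ∉ L → s' y = (s y ^^ ε)) (hL : IsClosed L) (hs : Gn L s x) :
    Gn L s' x := by
  filter_upwards [hs, eventually_eventually_nhds.2 h] with y h1 h2
  exact Gd.congr ε h2 hL h1

end good

section ctx

variable {X : Type} [MetricSpace X] {r : X → X → Prop}

lemma Ctx.leaf_closed (C : Ctx X r) (x : X) : IsClosed {y | r x y} :=
  C.closed.preimage (by fun_prop : Continuous fun y : X => (x, y))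

/-- local form of good functions in a box -/
lemma Ctx.box_const (C : Ctx X r) {s : X → Bool} {ψ : ℝ × ℝ → X} (hψ : IsBox r ψ)
    (hs : ∀ p ∈ Metric.ball (0 : ℝ × ℝ) 1, Gd {y | r (ψ 0) y} s (ψ p)) :
    ∃ β : Bool, ∀ p ∈ Metric.ball (0 : ℝ × ℝ) 1, (0 < p.2 → s (ψ p) = β) ∧
      (p.2 < 0 → s (ψ p) = !β) := by
  have h0 : (0 : ℝ × ℝ) ∈ Metric.ball (0 : ℝ × ℝ) 1 := by simp
  have hup : ((0, 1/2) : ℝ × ℝ) ∈ Metric.ball (0 : ℝ × ℝ) 1 := by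
    rw [mem_ball_iff]; norm_num [abs_lt]
  have hlo : ((0, -1/2) : ℝ × ℝ) ∈ Metric.ball (0 : ℝ × ℝ) 1 := by
    rw [mem_ball_iff]; norm_num [abs_lt]
  have key1 : ∀ p ∈ Metric.ball (0 : ℝ × ℝ) 1, 0 < p.2 → s (ψ p) = s (ψ (0, 1/2)) := by
    intro p hp h
    refine const_of_locConst (hψ.upper_conn 0) ?_ ⟨p, ⟨hp, h⟩, rfl⟩ ⟨_, ⟨hup, by norm_num⟩, rfl⟩
    rintro _ ⟨q, ⟨hq, hq0⟩, rfl⟩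
    refine (hs q hq).1 ?_
    change ¬ r (ψ 0) (ψ q)
    rw [hψ.iff h0 hq]
    exact ne_of_lt hq0
  have key2 : ∀ p ∈ Metric.ball (0 : ℝ × ℝ) 1, p.2 < 0 → s (ψ p) = s (ψ (0, -1/2)) := by
    intro p hp h
    refine const_of_locConst (hψ.lower_conn 0) ?_ ⟨p, ⟨hp, h⟩, rfl⟩ ⟨_, ⟨hlo, by norm_num⟩, rfl⟩
    rintro _ ⟨q, ⟨hq, hq0⟩, rfl⟩
    refine (hs q hq).1 ?_
    change ¬ r (ψ 0) (ψ q)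
    rw [hψ.iff h0 hq]
    exact ne_of_gt hq0
  refine ⟨s (ψ (0, 1/2)), fun p hp => ⟨key1 p hp, fun h => ?_⟩⟩
  rw [key2 p hp h]
  by_contra hne
  have heq : s (ψ (0, -1/2)) = s (ψ (0, 1/2)) := by
    revert hne; cases s (ψ (0, -1/2)) <;> cases s (ψ (0, 1/2)) <;> simp
  obtain ⟨y, ⟨hy1, hy2⟩, q, hq, rfl⟩ := (((hs 0 h0).2 (C.equiv.refl _) (!(s (ψ (0, 1/2))))).and_eventually
    (hψ.open_ball.mem_nhds ⟨0, h0, rfl⟩)).exists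
  have hq0 : ¬ (0 : ℝ × ℝ).2 = q.2 := by
    rw [← hψ.iff h0 hq]; exact hy1
  rcases lt_or_gt_of_ne hq0 with h | h
  · rw [key1 q hq h] at hy2; simp at hy2
  · rw [key2 q hq h, heq] at hy2; simp at hy2

lemma Ctx.germ (C : Ctx X r) {x₀ : X} {s s' : X → Bool} {z : X} (hs : Gn {y | r x₀ y} s z)
    (hs' : Gn {y | r x₀ y} s' z) :
    ∃ ε : Bool, ∀ᶠ y in 𝓝 z, y ∉ {y | r x₀ y} → s' y = (s y ^^ ε) := by
  by_cases hz : r x₀ z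
  · have hL : {y | r x₀ y} = {y | r z y} := by
      ext y; exact ⟨fun h => C.equiv.trans (C.equiv.symm hz) h, fun h => C.equiv.trans hz h⟩
    rw [hL] at hs hs' ⊢
    obtain ⟨ψ, hψ, rfl, hV⟩ := C.box z _ (hs.and hs')
    have hsub : ∀ p ∈ Metric.ball (0 : ℝ × ℝ) 1, Gd {y | r (ψ 0) y} s (ψ p) ∧
      Gd {y | r (ψ 0) y} s' (ψ p) := fun p hp => hV ⟨p, Metric.ball_subset_closedBall hp, rfl⟩
    obtain ⟨β, hβ⟩ := C.box_const hψ (fun p hp => (hsub p hp).1)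
    obtain ⟨β', hβ'⟩ := C.box_const hψ (fun p hp => (hsub p hp).2)
    have h0 : (0 : ℝ × ℝ) ∈ Metric.ball (0 : ℝ × ℝ) 1 := by simp
    refine ⟨β ^^ β', ?_⟩
    filter_upwards [hψ.open_ball.mem_nhds ⟨0, h0, rfl⟩]
    rintro _ ⟨p, hp, rfl⟩ hpL
    have hq0 : ¬ (0 : ℝ × ℝ).2 = p.2 := by
      rw [← hψ.iff h0 hp]; exact hpL
    rcases lt_or_gt_of_ne hq0 with h | h
    · rw [(hβ p hp).1 h, (hβ' p hp).1 h]; cases β <;> cases β' <;> rfl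
    · rw [(hβ p hp).2 h, (hβ' p hp).2 h]; cases β <;> cases β' <;> rfl
  · refine ⟨s z ^^ s' z, ?_⟩
    filter_upwards [hs.self_of_nhds.1 hz, hs'.self_of_nhds.1 hz] with y h1 h2 _
    rw [h1, h2]; cases s z <;> cases s' z <;> rfl

lemma Ctx.local_good (C : Ctx X r) (x₀ z : X) : ∃ s : X → Bool, Gn {y | r x₀ y} s z := by
  classical
  by_cases hz : r x₀ z
  · have hL : {y | r x₀ y} = {y | r z y} := by
      ext y; exact ⟨fun h => C.equiv.trans (C.equiv.symm hz) h, fun h => C.equiv.trans hz h⟩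
    rw [hL]
    obtain ⟨ψ, hψ, rfl, -⟩ := C.box z univ univ_mem
    have h0 : (0 : ℝ × ℝ) ∈ Metric.ball (0 : ℝ × ℝ) 1 := by simp
    let U := ψ '' {p | p ∈ Metric.ball (0 : ℝ × ℝ) 1 ∧ 0 < p.2}
    let D := ψ '' {p | p ∈ Metric.ball (0 : ℝ × ℝ) 1 ∧ p.2 < 0}
    have hUL : ∀ x ∈ U, ¬ r (ψ 0) x := by
      rintro _ ⟨p, ⟨hp, hp0⟩, rfl⟩
      rw [hψ.iff h0 hp]; exact ne_of_lt hp0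
    have hDL : ∀ x ∈ D, ¬ r (ψ 0) x := by
      rintro _ ⟨p, ⟨hp, hp0⟩, rfl⟩
      rw [hψ.iff h0 hp]; exact ne_of_gt hp0
    have hDU : ∀ x ∈ D, x ∉ U := by
      rintro _ ⟨p, ⟨hp, hp0⟩, rfl⟩ ⟨q, ⟨hq, hq0⟩, h⟩
      have := hψ.1.injective h
      subst this
      exact lt_asymm hp0 hq0
    refine ⟨fun x => decide (x ∈ U), ?_⟩
    filter_upwards [hψ.open_ball.mem_nhds ⟨0, h0, rfl⟩]
    rintro _ ⟨p, hp, rfl⟩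
    constructor
    · intro hpL
      have hq0 : ¬ (0 : ℝ × ℝ).2 = p.2 := by
        rw [← hψ.iff h0 hp]; exact hpL
      rcases lt_or_gt_of_ne hq0 with h | h
      · have hpU : ψ p ∈ U := ⟨p, ⟨hp, h⟩, rfl⟩
        filter_upwards [(hψ.upper_open 0).mem_nhds hpU] with y hy
        have hy : y ∈ U := hy
        simp [hy, hpU]
      · have hpD : ψ p ∈ D := ⟨p, ⟨hp, h⟩, rfl⟩
        filter_upwards [(hψ.lower_open 0).mem_nhds hpD] with y hy
        have hy : y ∈ D := hy
        simp [hDU _ hy, hDU _ hpD]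
    · intro hpL b
      have hp0 : (0 : ℝ × ℝ).2 = p.2 := (hψ.iff h0 hp).1 hpL
      cases b
      · refine (hψ.freq_lower hp).mono fun y hy => ?_
        rw [← hp0] at hy
        have hy : y ∈ D := hy
        exact ⟨hDL y hy, by simp [hDU _ hy]⟩
      · refine (hψ.freq_upper hp).mono fun y hy => ?_
        rw [← hp0] at hy
        have hy : y ∈ U := hy
        exact ⟨hUL y hy, by simp [hy]⟩
  · refine ⟨fun _ => true, ?_⟩
    filter_upwards [(C.leaf_closed x₀).isOpen_compl.mem_nhds hz] with y hy
    exact ⟨fun _ => by simp, fun h => absurd h hy⟩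

/-- the complement of a leaf is dense -/
lemma Ctx.freq_compl (C : Ctx X r) (x₀ z : X) : ∃ᶠ y in 𝓝 z, y ∉ {y | r x₀ y} := by
  by_cases hz : r x₀ z
  · obtain ⟨s, hs⟩ := C.local_good x₀ z
    exact (hs.self_of_nhds.2 hz true).mono fun y hy => hy.1
  · exact Eventually.frequently ((C.leaf_closed x₀).isOpen_compl.mem_nhds hz)

lemma Ctx.glue (C : Ctx X r) (x₀ : X) {K₁ K₂ : Set X} (h₁ : IsClosed K₁) (h₂ : IsClosed K₂)
    (hc : IsPreconnected (K₁ ∩ K₂)) (H₁ : ∃ s, ∀ z ∈ K₁, Gn {y | r x₀ y} s z)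
    (H₂ : ∃ s, ∀ z ∈ K₂, Gn {y | r x₀ y} s z) :
    ∃ s, ∀ z ∈ K₁ ∪ K₂, Gn {y | r x₀ y} s z := by
  classical
  obtain ⟨s₁, hs₁⟩ := H₁
  obtain ⟨s₂, hs₂⟩ := H₂
  have hL := C.leaf_closed x₀
  set L := {y | r x₀ y} with hLdef
  let O : Bool → Set X := fun ε => {z | ∀ᶠ y in 𝓝 z, y ∉ L → s₁ y = (s₂ y ^^ ε)}
  have hO : ∀ ε, IsOpen (O ε) := fun ε => isOpen_setOfPred_eventually_nhds
  have hd : Disjoint (O true) (O false) := by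
    rw [Set.disjoint_left]
    intro z hz hz'
    obtain ⟨y, hy, h1, h2⟩ := ((C.freq_compl x₀ z).and_eventually (hz.and hz')).exists
    have := h1 hy
    rw [h2 hy] at this
    revert this; cases s₂ y <;> simp
  have hcov : K₁ ∩ K₂ ⊆ O true ∪ O false := by
    rintro z ⟨hz1, hz2⟩
    obtain ⟨ε, hε⟩ := C.germ (hs₂ z hz2) (hs₁ z hz1)
    cases ε
    · exact Or.inr hε
    · exact Or.inl hε
  have hex : ∃ ε, K₁ ∩ K₂ ⊆ O ε := by
    rcases IsPreconnected.subset_or_subset (hO _) (hO _) hd hcov hc with h | h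
    · exact ⟨_, h⟩
    · exact ⟨_, h⟩
  obtain ⟨ε, hε⟩ := hex
  let P : Set X := {x | Metric.infEDist x K₁ ≤ Metric.infEDist x K₂}
  refine ⟨fun x => if x ∈ P then s₁ x else (s₂ x ^^ ε), ?_⟩
  have hcont1 : Continuous fun x => Metric.infEDist x K₁ := Metric.continuous_infEDist
  have hcont2 : Continuous fun x => Metric.infEDist x K₂ := Metric.continuous_infEDist
  intro z hz
  by_cases hz1 : z ∈ K₁ <;> by_cases hz2 : z ∈ K₂
  · refine Gn.congr false ?_ hL (hs₁ z hz1)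
    filter_upwards [hε ⟨hz1, hz2⟩] with y hy hyL
    have := hy hyL
    by_cases hP : y ∈ P <;> simp [hP, this]
  · refine Gn.congr false ?_ hL (hs₁ z hz1)
    have : Metric.infEDist z K₁ < Metric.infEDist z K₂ := by
      rw [Metric.infEDist_zero_of_mem hz1, pos_iff_ne_zero]
      rwa [Ne, ← Metric.mem_iff_infEDist_zero_of_closed h₂]
    filter_upwards [(isOpen_lt hcont1 hcont2).mem_nhds this] with y hy hyL
    have hP : y ∈ P := le_of_lt hy
    simp [hP]
  · refine Gn.congr ε ?_ hL (hs₂ z hz2)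
    have : Metric.infEDist z K₂ < Metric.infEDist z K₁ := by
      rw [Metric.infEDist_zero_of_mem hz2, pos_iff_ne_zero]
      rwa [Ne, ← Metric.mem_iff_infEDist_zero_of_closed h₁]
    filter_upwards [(isOpen_lt hcont2 hcont1).mem_nhds this] with y hy hyL
    have hP : y ∉ P := not_le_of_gt hy
    simp [hP]
  · exact absurd hz (by simp [hz1, hz2])

lemma Ctx.good_rect (C : Ctx X r) (x₀ : X) (e : X ≃ₜ (ℝ × ℝ)) (a b c d : ℝ) :
    ∃ s, ∀ z ∈ e ⁻¹' (Set.uIcc a b ×ˢ Set.uIcc c d), Gn {y | r x₀ y} s z := by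
  have gluing : ∀ I₁ I₂ J₁ J₂ : Set ℝ, IsClosed I₁ → IsClosed I₂ → IsClosed J₁ → IsClosed J₂ →
      I₁.OrdConnected → I₂.OrdConnected → J₁.OrdConnected → J₂.OrdConnected →
      (∃ s, ∀ z ∈ e ⁻¹' (I₁ ×ˢ J₁), Gn {y | r x₀ y} s z) →
      (∃ s, ∀ z ∈ e ⁻¹' (I₂ ×ˢ J₂), Gn {y | r x₀ y} s z) →
      ∃ s, ∀ z ∈ e ⁻¹' (I₁ ×ˢ J₁) ∪ e ⁻¹' (I₂ ×ˢ J₂), Gn {y | r x₀ y} s z := by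
    intro I₁ I₂ J₁ J₂ h1 h2 h3 h4 o1 o2 o3 o4 H1 H2
    refine C.glue x₀ ((h1.prod h3).preimage e.continuous) ((h2.prod h4).preimage e.continuous)
      ?_ H1 H2
    rw [← Set.preimage_inter, Set.prod_inter_prod, e.isPreconnected_preimage]
    exact (o1.inter o2).isPreconnected.prod (o3.inter o4).isPreconnected
  have open_good : ∀ s, IsOpen {z | Gn {y | r x₀ y} s z} := fun s => isOpen_setOfPred_eventually_nhds
  have step1 : ∀ t c d : ℝ, ∃ s, ∀ z ∈ e ⁻¹' ({t} ×ˢ Set.uIcc c d), Gn {y | r x₀ y} s z := by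
    intro t c d
    refine isPreconnected_univ.induction₂
      (fun c d => ∃ s, ∀ z ∈ e ⁻¹' ({t} ×ˢ Set.uIcc c d), Gn {y | r x₀ y} s z) ?_ ?_ ?_
      (mem_univ c) (mem_univ d)
    · intro c _
      obtain ⟨s, hs⟩ := C.local_good x₀ (e.symm (t, c))
      have ho : IsOpen ((fun u : ℝ => e.symm (t, u)) ⁻¹' {z | Gn {y | r x₀ y} s z}) :=
        (open_good s).preimage (by fun_prop)
      obtain ⟨δ, hδ, hb⟩ := Metric.isOpen_iff.1 ho c (show Gn _ s (e.symm (t, c)) from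
        eventually_eventually_nhds.2 hs |>.self_of_nhds)
      rw [nhdsWithin_univ]
      filter_upwards [Metric.ball_mem_nhds c hδ] with d hd
      refine ⟨s, ?_⟩
      rintro z ⟨hz1, hz2⟩
      have h3 : (e z).2 ∈ Metric.ball c δ := by
        have hconv := (convex_ball c δ).ordConnected
        exact hconv.uIcc_subset (Metric.mem_ball_self hδ) hd hz2
      have h4 := hb h3
      have h5 : e.symm (t, (e z).2) = z := by
        rw [← (show (e z).1 = t from hz1)]; simp
      simpa [h5] using h4
    · intro c d f _ _ _ h1 h2
      obtain ⟨s, hs⟩ := gluing {t} {t} (Set.uIcc c d) (Set.uIcc d f) isClosed_singleton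
        isClosed_singleton isClosed_Icc isClosed_Icc ordConnected_singleton ordConnected_singleton
        ordConnected_Icc ordConnected_Icc h1 h2
      refine ⟨s, ?_⟩
      rintro z ⟨hz1, hz2⟩
      apply hs
      rcases Set.uIcc_subset_uIcc_union_uIcc (b := d) hz2 with h | h
      · exact Or.inl ⟨hz1, h⟩
      · exact Or.inr ⟨hz1, h⟩
    · rintro c d _ _ ⟨s, hs⟩
      exact ⟨s, by rwa [Set.uIcc_comm]⟩
  refine isPreconnected_univ.induction₂
    (fun a b => ∃ s, ∀ z ∈ e ⁻¹' (Set.uIcc a b ×ˢ Set.uIcc c d), Gn {y | r x₀ y} s z) ?_ ?_ ?_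
    (mem_univ a) (mem_univ b)
  · intro a _
    obtain ⟨s, hs⟩ := step1 a c d
    have ho : IsOpen (e.symm ⁻¹' {z | Gn {y | r x₀ y} s z}) :=
      (open_good s).preimage (by fun_prop)
    obtain ⟨u, v, hu, hv, hau, hcv, huv⟩ := generalized_tube_lemma (isCompact_singleton (x := a))
      (isCompact_uIcc (a := c) (b := d)) ho (fun w hw => hs (e.symm w) (by simpa using hw))
    obtain ⟨δ, hδ, hb⟩ := Metric.isOpen_iff.1 hu a (hau rfl)
    rw [nhdsWithin_univ]
    filter_upwards [Metric.ball_mem_nhds a hδ] with b hbb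
    refine ⟨s, ?_⟩
    rintro z ⟨hz1, hz2⟩
    have h3 : (e z).1 ∈ Metric.ball a δ := by
      have hconv := (convex_ball a δ).ordConnected
      exact hconv.uIcc_subset (Metric.mem_ball_self hδ) hbb hz1
    have := huv (show e z ∈ u ×ˢ v from ⟨hb h3, hcv hz2⟩)
    simpa using this
  · intro a b f _ _ _ h1 h2
    obtain ⟨s, hs⟩ := gluing (Set.uIcc a b) (Set.uIcc b f) (Set.uIcc c d) (Set.uIcc c d)
      isClosed_Icc isClosed_Icc isClosed_Icc isClosed_Icc ordConnected_Icc ordConnected_Icc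
      ordConnected_Icc ordConnected_Icc h1 h2
    refine ⟨s, ?_⟩
    rintro z ⟨hz1, hz2⟩
    apply hs
    rcases Set.uIcc_subset_uIcc_union_uIcc (b := b) hz1 with h | h
    · exact Or.inl ⟨h, hz2⟩
    · exact Or.inr ⟨h, hz2⟩
  · rintro c d _ _ ⟨s, hs⟩
    exact ⟨s, by rwa [Set.uIcc_comm]⟩

lemma Ctx.good_compact (C : Ctx X r) (x₀ : X) {K : Set X} (hK : IsCompact K) :
    ∃ s, ∀ z ∈ K, Gn {y | r x₀ y} s z := by
  obtain ⟨e⟩ := C.homeo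
  obtain ⟨R, hR⟩ := (hK.image e.continuous).isBounded.subset_closedBall 0
  obtain ⟨s, hs⟩ := C.good_rect x₀ e (-R) R (-R) R
  refine ⟨s, fun z hz => hs z ?_⟩
  have h := hR ⟨z, hz, rfl⟩
  simp only [Metric.mem_closedBall, dist_zero_right, Prod.norm_def, Real.norm_eq_abs,
    sup_le_iff, abs_le] at h
  exact ⟨Set.Icc_subset_uIcc ⟨h.1.1, h.1.2⟩, Set.Icc_subset_uIcc ⟨h.2.1, h.2.2⟩⟩

end ctx

/-- The two sides of a separating closed line. -/
structure Sides {X : Type} [MetricSpace X] (L A B : Set X) : Prop where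
  oA : IsOpen A
  oB : IsOpen B
  disj : Disjoint A B
  cA : IsPreconnected A
  cB : IsPreconnected B
  cov : A ∪ B = Lᶜ
  LA : L ⊆ closure A
  LB : L ⊆ closure B

section sides

variable {X : Type} [MetricSpace X] {L A B : Set X}

lemma Sides.symm (h : Sides L A B) : Sides L B A :=
  ⟨h.oB, h.oA, h.disj.symm, h.cB, h.cA, by rw [union_comm]; exact h.cov, h.LB, h.LA⟩

lemma Sides.notA (h : Sides L A B) {x : X} (hx : x ∈ A) : x ∉ L := by
  have : x ∈ Lᶜ := h.cov ▸ Or.inl hx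
  exact this

lemma Sides.notB (h : Sides L A B) {x : X} (hx : x ∈ B) : x ∉ L := h.symm.notA hx

lemma Sides.mem_or (h : Sides L A B) {x : X} (hx : x ∉ L) : x ∈ A ∨ x ∈ B := by
  have : x ∈ Lᶜ := hx
  rw [← h.cov] at this
  exact this

lemma Sides.notAB (h : Sides L A B) {x : X} (hx : x ∈ A) : x ∉ B :=
  Set.disjoint_left.1 h.disj hx

lemma Sides.subset (h : Sides L A B) {K : Set X} (hK : IsPreconnected K) (hKL : ∀ k ∈ K, k ∉ L)
    {x : X} (hx : x ∈ K) (hxA : x ∈ A) : K ⊆ A :=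
  hK.subset_left_of_subset_union h.oA h.oB h.disj (fun k hk => h.mem_or (hKL k hk)) ⟨x, hx, hxA⟩

lemma Sides.closure (h : Sides L A B) : closure A = A ∪ L := by
  apply Subset.antisymm
  · have : A ∪ L = Bᶜ := by
      ext x
      constructor
      · rintro (hx | hx)
        · exact h.notAB hx
        · exact fun hB => h.notB hB hx
      · intro hx
        by_cases hL : x ∈ L
        · exact Or.inr hL
        · exact Or.inl ((h.mem_or hL).resolve_right hx)
    rw [this]
    refine closure_minimal (fun x hx => h.notAB hx) h.oB.isClosed_compl
  · exact union_subset subset_closure h.LA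

lemma Sides.halfPlane (h : Sides L A B) {K : Set X} (hKA : K ⊆ A) (hne : K.Nonempty) :
    halfPlaneOf L K = A ∪ L := by
  have : (⋃ x ∈ K, connectedComponentIn Lᶜ x) = A := by
    apply Subset.antisymm
    · intro y hy
      simp only [mem_iUnion] at hy
      obtain ⟨x, hx, hy⟩ := hy
      exact h.subset isPreconnected_connectedComponentIn
        (fun k hk => connectedComponentIn_subset _ _ hk)
        (mem_connectedComponentIn (h.notA (hKA hx))) (hKA hx) hy
    · obtain ⟨x, hx⟩ := hne
      intro y hy
      simp only [mem_iUnion]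
      exact ⟨x, hx, h.cA.subset_connectedComponentIn (hKA hx) (fun z hz => h.notA hz) hy⟩
  rw [halfPlaneOf, this, h.closure]

end sides

section ctx2

variable {X : Type} [MetricSpace X] {r : X → X → Prop}

lemma Ctx.lpc (C : Ctx X r) : LocallyPathConnectedSpace X := by
  obtain ⟨e⟩ := C.homeo
  exact e.isOpenEmbedding.locallyPathConnectedSpace

lemma Ctx.connected (C : Ctx X r) : ConnectedSpace X := by
  obtain ⟨e⟩ := C.homeo
  exact e.symm.surjective.connectedSpace e.symm.continuous

lemma exists_path [LocallyPathConnectedSpace X] {A : Set X} (hA : IsOpen A)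
    (hc : IsPreconnected A) {a b : X} (ha : a ∈ A) (hb : b ∈ A) :
    ∃ K, IsCompact K ∧ IsPreconnected K ∧ K ⊆ A ∧ a ∈ K ∧ b ∈ K := by
  have hp : IsPathConnected A := (hA.isConnected_iff_isPathConnected).1 ⟨⟨a, ha⟩, hc⟩
  obtain ⟨γ, hγ⟩ := hp.joinedIn a ha b hb
  refine ⟨range γ, isCompact_range γ.continuous, isPreconnected_range γ.continuous, ?_,
    ⟨0, γ.source⟩, ⟨1, γ.target⟩⟩
  rintro _ ⟨t, rfl⟩
  exact hγ t

/-- each component of the complement of a leaf accumulates on the whole leaf -/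
lemma Ctx.comp_closure (C : Ctx X r) (x₀ x : X) (hx : x ∉ {y | r x₀ y}) :
    {y | r x₀ y} ⊆ closure (connectedComponentIn {y | r x₀ y}ᶜ x) := by
  have := C.lpc
  have := C.connected
  have hL := C.leaf_closed x₀
  have hLc := C.conn x₀
  have hx₀ : x₀ ∈ {y | r x₀ y} := C.equiv.refl x₀
  set L := {y | r x₀ y} with hLd
  set K := connectedComponentIn Lᶜ x with hK
  have hKo : IsOpen K := hL.isOpen_compl.connectedComponentIn
  have hxK : x ∈ K := mem_connectedComponentIn hx
  have hKL : K ⊆ Lᶜ := connectedComponentIn_subset _ _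
  have hcl : ∀ y ∈ closure K, y ∉ L → y ∈ K := by
    intro y hy hyL
    have ho : IsOpen (connectedComponentIn Lᶜ y) := hL.isOpen_compl.connectedComponentIn
    obtain ⟨w, hw1, hw2⟩ := mem_closure_iff.1 hy _ ho (mem_connectedComponentIn hyL)
    have e1 := connectedComponentIn_eq hw1
    have e2 := connectedComponentIn_eq hw2
    rw [hK, e2, ← e1]
    exact mem_connectedComponentIn hyL
  have hne : (L ∩ closure K).Nonempty := by
    by_contra hemp
    have hclosed : IsClosed K := by
      rw [← closure_subset_iff_isClosed]
      intro y hy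
      exact hcl y hy fun hyL => hemp ⟨y, hyL, hy⟩
    have := IsClopen.eq_univ ⟨hclosed, hKo⟩ ⟨x, hxK⟩
    exact hKL (this ▸ mem_univ x₀ : x₀ ∈ K) hx₀
  have hopen : ∀ z ∈ L ∩ closure K, ∀ᶠ y in 𝓝 z, y ∈ L → y ∈ closure K := by
    rintro z ⟨hzL, hzK⟩
    have hLz : ∀ y, y ∈ L ↔ r z y := fun y =>
      ⟨fun h => C.equiv.trans (C.equiv.symm hzL) h, fun h => C.equiv.trans hzL h⟩
    obtain ⟨ψ, hψ, rfl, -⟩ := C.box z univ univ_mem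
    have h0 : (0 : ℝ × ℝ) ∈ Metric.ball (0 : ℝ × ℝ) 1 := by simp
    obtain ⟨w, ⟨q, hq, rfl⟩, hwK⟩ := mem_closure_iff.1 hzK _ hψ.open_ball ⟨0, h0, rfl⟩
    have hq0 : ¬ (0 : ℝ × ℝ).2 = q.2 := by
      rw [← hψ.iff h0 hq, ← hLz]; exact hKL hwK
    filter_upwards [hψ.open_ball.mem_nhds ⟨0, h0, rfl⟩]
    rintro _ ⟨p, hp, rfl⟩ hpL
    have hp0 : (0 : ℝ × ℝ).2 = p.2 := by
      rw [← hψ.iff h0 hp, ← hLz]; exact hpL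
    rw [mem_closure_iff_frequently]
    rcases lt_or_gt_of_ne hq0 with h | h
    · refine (hψ.freq_upper hp).mono fun y hy => ?_
      have hsub := (hψ.upper_conn 0).subset_connectedComponentIn (F := Lᶜ)
        (show ψ q ∈ ψ '' {p | p ∈ Metric.ball (0 : ℝ × ℝ) 1 ∧ 0 < p.2} from ⟨q, ⟨hq, h⟩, rfl⟩) (by
          rintro _ ⟨u, ⟨hu, hu0⟩, rfl⟩ huL
          rw [hLz, hψ.iff h0 hu] at huL
          exact absurd huL (ne_of_lt hu0))
      rw [hK, connectedComponentIn_eq hwK]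
      rw [← hp0] at hy
      exact hsub hy
    · refine (hψ.freq_lower hp).mono fun y hy => ?_
      have hsub := (hψ.lower_conn 0).subset_connectedComponentIn (F := Lᶜ)
        (show ψ q ∈ ψ '' {p | p ∈ Metric.ball (0 : ℝ × ℝ) 1 ∧ p.2 < 0} from ⟨q, ⟨hq, h⟩, rfl⟩) (by
          rintro _ ⟨u, ⟨hu, hu0⟩, rfl⟩ huL
          rw [hLz, hψ.iff h0 hu] at huL
          exact absurd huL (ne_of_gt hu0))
      rw [hK, connectedComponentIn_eq hwK]
      rw [← hp0] at hy
      exact hsub hy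
  let O : Set X := {z | ∀ᶠ y in 𝓝 z, y ∈ L → y ∈ closure K}
  intro z hz
  by_contra hzK
  obtain ⟨w, hwL, hwO, hwK⟩ := hLc O (closure K)ᶜ isOpen_setOfPred_eventually_nhds
    isClosed_closure.isOpen_compl (by
      intro y hy
      by_cases hyK : y ∈ closure K
      · exact Or.inl (hopen y ⟨hy, hyK⟩)
      · exact Or.inr hyK) (hne.imp fun y hy => ⟨hy.1, hopen y hy⟩) ⟨z, hz, hzK⟩
  exact hwK (hwO.self_of_nhds hwL)

lemma Ctx.sides (C : Ctx X r) (x₀ : X) : ∃ A B, Sides {y | r x₀ y} A B := by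
  have := C.lpc
  have hL := C.leaf_closed x₀
  have hacc := C.comp_closure x₀
  have hx₀ : x₀ ∈ {y | r x₀ y} := C.equiv.refl x₀
  obtain ⟨ψ, hψ, hzx, -⟩ := C.box x₀ univ univ_mem
  have hgood := fun K (hK : IsCompact K) => C.good_compact x₀ hK
  have hLz : ∀ y, y ∈ {y | r x₀ y} ↔ r (ψ 0) y := fun y => by rw [hzx]; rfl
  have h0 : (0 : ℝ × ℝ) ∈ Metric.ball (0 : ℝ × ℝ) 1 := by simp
  have hup : ((0, 1/2) : ℝ × ℝ) ∈ Metric.ball (0 : ℝ × ℝ) 1 := by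
    rw [mem_ball_iff]; norm_num [abs_lt]
  have hlo : ((0, -1/2) : ℝ × ℝ) ∈ Metric.ball (0 : ℝ × ℝ) 1 := by
    rw [mem_ball_iff]; norm_num [abs_lt]
  set L := {y | r x₀ y} with hLd
  have hLeq : L = {y | r (ψ 0) y} := by ext y; exact hLz y
  set a := ψ (0, 1/2) with ha
  set b := ψ (0, -1/2) with hb
  have haL : a ∉ L := by rw [hLz, hψ.iff h0 hup]; norm_num
  have hbL : b ∉ L := by rw [hLz, hψ.iff h0 hlo]; norm_num
  have hAo : IsOpen (connectedComponentIn Lᶜ a) := hL.isOpen_compl.connectedComponentIn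
  have hBo : IsOpen (connectedComponentIn Lᶜ b) := hL.isOpen_compl.connectedComponentIn
  have hbA : b ∉ connectedComponentIn Lᶜ a := by
    intro hbA
    obtain ⟨K, hK, hKc, hKA, haK, hbK⟩ := exists_path hAo isPreconnected_connectedComponentIn
      (mem_connectedComponentIn haL) hbA
    obtain ⟨s, hs⟩ := hgood (K ∪ ψ '' Metric.closedBall 0 1)
      (hK.union ((isCompact_closedBall _ _).image hψ.1.continuous))
    have e1 : s a = s b := const_of_locConst hKc (fun x hx =>
      (hs x (Or.inl hx)).self_of_nhds.1 (connectedComponentIn_subset _ _ (hKA hx))) haK hbK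
    obtain ⟨β, hβ⟩ := C.box_const (s := s) hψ (fun p hp => by
      rw [← hLeq]
      exact (hs _ (Or.inr ⟨p, Metric.ball_subset_closedBall hp, rfl⟩)).self_of_nhds)
    rw [ha, hb, (hβ _ hup).1 (by norm_num), (hβ _ hlo).2 (by norm_num)] at e1
    simp at e1
  refine ⟨connectedComponentIn Lᶜ a, connectedComponentIn Lᶜ b, hAo, hBo, ?_,
    isPreconnected_connectedComponentIn, isPreconnected_connectedComponentIn, ?_,
    hacc a haL, hacc b hbL⟩
  · rw [Set.disjoint_left]
    intro y hy1 hy2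
    apply hbA
    rw [connectedComponentIn_eq hy1, ← connectedComponentIn_eq hy2]
    exact mem_connectedComponentIn hbL
  · apply Subset.antisymm
    · exact union_subset (connectedComponentIn_subset _ _) (connectedComponentIn_subset _ _)
    · intro x hx
      obtain ⟨w, ⟨q, hq, rfl⟩, hwK⟩ := mem_closure_iff.1 (hacc x hx hx₀) _ hψ.open_ball
        ⟨0, h0, hzx⟩
      have hwL : ψ q ∉ L := connectedComponentIn_subset _ _ hwK
      have hq0 : ¬ (0 : ℝ × ℝ).2 = q.2 := by
        rw [← hψ.iff h0 hq, ← hLz]; exact hwL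
      rcases lt_or_gt_of_ne hq0 with h | h
      · left
        have hsub := (hψ.upper_conn 0).subset_connectedComponentIn (F := Lᶜ)
          (show a ∈ ψ '' {p | p ∈ Metric.ball (0 : ℝ × ℝ) 1 ∧ 0 < p.2} from ⟨_, ⟨hup, by norm_num⟩, rfl⟩) (by
            rintro _ ⟨u, ⟨hu, hu0⟩, rfl⟩ huL
            rw [hLz, hψ.iff h0 hu] at huL
            exact absurd huL (ne_of_lt hu0))
        have h3 : ψ q ∈ connectedComponentIn Lᶜ a := hsub ⟨q, ⟨hq, h⟩, rfl⟩
        rw [connectedComponentIn_eq h3, ← connectedComponentIn_eq hwK]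
        exact mem_connectedComponentIn hx
      · right
        have hsub := (hψ.lower_conn 0).subset_connectedComponentIn (F := Lᶜ)
          (show b ∈ ψ '' {p | p ∈ Metric.ball (0 : ℝ × ℝ) 1 ∧ p.2 < 0} from ⟨_, ⟨hlo, by norm_num⟩, rfl⟩) (by
            rintro _ ⟨u, ⟨hu, hu0⟩, rfl⟩ huL
            rw [hLz, hψ.iff h0 hu] at huL
            exact absurd huL (ne_of_gt hu0))
        have h3 : ψ q ∈ connectedComponentIn Lᶜ b := hsub ⟨q, ⟨hq, h⟩, rfl⟩
        rw [connectedComponentIn_eq h3, ← connectedComponentIn_eq hwK]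
        exact mem_connectedComponentIn hx

/-- in a box, points above and below a plaque are on different sides of the leaf -/
lemma Ctx.box_sides (C : Ctx X r) {ψ : ℝ × ℝ → X} (hψ : IsBox r ψ) {q u v : ℝ × ℝ}
    (hq : q ∈ Metric.ball (0 : ℝ × ℝ) 1) (hu : u ∈ Metric.ball (0 : ℝ × ℝ) 1)
    (hv : v ∈ Metric.ball (0 : ℝ × ℝ) 1) (huq : u.2 < q.2) (hqv : q.2 < v.2) {A B : Set X}
    (h : Sides {y | r (ψ q) y} A B) : (ψ u ∈ A ∧ ψ v ∈ B) ∨ (ψ u ∈ B ∧ ψ v ∈ A) := by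
  -- if both are in the same side, the other side misses the box
  have main : ∀ A B : Set X, Sides {y | r (ψ q) y} A B → ψ u ∈ A → ψ v ∈ A → False := by
    intro A B h huA hvA
    have hup := h.subset (hψ.upper_conn q.2) (by
      rintro _ ⟨p, ⟨hp, hp0⟩, rfl⟩ hL
      exact absurd ((hψ.iff hq hp).1 hL) (ne_of_lt hp0)) ⟨v, ⟨hv, hqv⟩, rfl⟩ hvA
    have hlo := h.subset (hψ.lower_conn q.2) (by
      rintro _ ⟨p, ⟨hp, hp0⟩, rfl⟩ hL
      exact absurd ((hψ.iff hq hp).1 hL) (ne_of_gt hp0)) ⟨u, ⟨hu, huq⟩, rfl⟩ huA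
    obtain ⟨w, ⟨p, hp, rfl⟩, hwB⟩ := mem_closure_iff.1 (h.LB (C.equiv.refl (ψ q))) _ hψ.open_ball
      ⟨q, hq, rfl⟩
    have hne : ¬ q.2 = p.2 := by
      rw [← hψ.iff hq hp]; exact h.notB hwB
    rcases lt_or_gt_of_ne hne with h1 | h1
    · exact h.notAB (hup ⟨p, ⟨hp, h1⟩, rfl⟩) hwB
    · exact h.notAB (hlo ⟨p, ⟨hp, h1⟩, rfl⟩) hwB
  have huL : ψ u ∉ {y | r (ψ q) y} := fun hL =>
    absurd ((hψ.iff hq hu).1 hL) (ne_of_gt huq)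
  have hvL : ψ v ∉ {y | r (ψ q) y} := fun hL =>
    absurd ((hψ.iff hq hv).1 hL) (ne_of_lt hqv)
  rcases h.mem_or huL with h1 | h1 <;> rcases h.mem_or hvL with h2 | h2
  · exact (main A B h h1 h2).elim
  · exact Or.inl ⟨h1, h2⟩
  · exact Or.inr ⟨h1, h2⟩
  · exact (main B A h.symm h1 h2).elim

/-- `a` and `b` are connected off the leaf of `x` -/
def Con (r : X → X → Prop) (x a b : X) : Prop :=
  ∃ K, IsCompact K ∧ IsPreconnected K ∧ (∀ k ∈ K, ¬ r x k) ∧ a ∈ K ∧ b ∈ K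

/-- `a` and `b` are separated by the leaf of `x` -/
def Sp (r : X → X → Prop) (x a b : X) : Prop :=
  ∃ A B, Sides {y | r x y} A B ∧ a ∈ A ∧ b ∈ B

lemma Con.mem {x a b : X} (h : Con r x a b) {A B : Set X} (hs : Sides {y | r x y} A B)
    (ha : a ∈ A) : b ∈ A := by
  obtain ⟨K, -, hc, hKL, haK, hbK⟩ := h
  exact hs.subset hc hKL haK ha hbK

lemma Con.eventually (C : Ctx X r) {x a b : X} (h : Con r x a b) : ∀ᶠ x' in 𝓝 x, Con r x' a b := by
  obtain ⟨K, hK, hc, hKL, haK, hbK⟩ := h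
  have := hK.eventually_forall_of_forall_eventually (x₀ := x) (P := fun x k => ¬ r x k)
    (fun k hk => C.closed.isOpen_compl.mem_nhds (hKL k hk))
  filter_upwards [this] with x' hx'
  exact ⟨K, hK, hc, hx', haK, hbK⟩

lemma Sides.con (C : Ctx X r) {x a b : X} {A B : Set X} (hs : Sides {y | r x y} A B)
    (ha : a ∈ A) (hb : b ∈ A) : Con r x a b := by
  have := C.lpc
  obtain ⟨K, hK, hKc, hKA, haK, hbK⟩ := exists_path hs.oA hs.cA ha hb
  exact ⟨K, hK, hKc, fun k hk => hs.notA (hKA hk), haK, hbK⟩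

lemma Sp.eventually (C : Ctx X r) {x a b : X} (h : Sp r x a b) : ∀ᶠ x' in 𝓝 x, Sp r x' a b := by
  obtain ⟨A, B, hs, ha, hb⟩ := h
  obtain ⟨ψ, hψ, rfl, -⟩ := C.box x univ univ_mem
  have h0 : (0 : ℝ × ℝ) ∈ Metric.ball (0 : ℝ × ℝ) 1 := by simp
  have hup : ((0, 1/2) : ℝ × ℝ) ∈ Metric.ball (0 : ℝ × ℝ) 1 := by
    rw [mem_ball_iff]; norm_num [abs_lt]
  have hlo : ((0, -1/2) : ℝ × ℝ) ∈ Metric.ball (0 : ℝ × ℝ) 1 := by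
    rw [mem_ball_iff]; norm_num [abs_lt]
  have ho : IsOpen (ψ '' {p | p ∈ Metric.ball (0 : ℝ × ℝ) 1 ∧ -1/2 < p.2 ∧ p.2 < 1/2}) :=
    hψ.1.isOpenMap _ (Metric.isOpen_ball.inter ((isOpen_lt continuous_const continuous_snd).inter
      (isOpen_lt continuous_snd continuous_const)))
  have hnh := ho.mem_nhds (show ψ 0 ∈ ψ '' {p | p ∈ Metric.ball (0 : ℝ × ℝ) 1 ∧ -1/2 < p.2 ∧ p.2 < 1/2} from
    ⟨0, ⟨h0, by norm_num, by norm_num⟩, rfl⟩)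
  rcases C.box_sides hψ h0 hlo hup (by norm_num) (by norm_num) hs with ⟨h1, h2⟩ | ⟨h1, h2⟩
  · filter_upwards [hnh, (hs.con C h1 ha).eventually C, (hs.symm.con C h2 hb).eventually C]
    rintro _ ⟨p, ⟨hp, hp1, hp2⟩, rfl⟩ c1 c2
    obtain ⟨A', B', hs'⟩ := C.sides (ψ p)
    rcases C.box_sides hψ hp hlo hup hp1 hp2 hs' with ⟨h3, h4⟩ | ⟨h3, h4⟩
    · exact ⟨A', B', hs', c1.mem hs' h3, c2.mem hs'.symm h4⟩
    · exact ⟨B', A', hs'.symm, c1.mem hs'.symm h3, c2.mem hs' h4⟩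
  · filter_upwards [hnh, (hs.con C h2 ha).eventually C, (hs.symm.con C h1 hb).eventually C]
    rintro _ ⟨p, ⟨hp, hp1, hp2⟩, rfl⟩ c1 c2
    obtain ⟨A', B', hs'⟩ := C.sides (ψ p)
    rcases C.box_sides hψ hp hlo hup hp1 hp2 hs' with ⟨h3, h4⟩ | ⟨h3, h4⟩
    · exact ⟨B', A', hs'.symm, c1.mem hs'.symm h4, c2.mem hs' h3⟩
    · exact ⟨A', B', hs', c1.mem hs' h4, c2.mem hs'.symm h3⟩

/-- leaves close to the leaf of `z` on the side of `a` separate `a` from `z` -/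
lemma Ctx.near_aux (C : Ctx X r) {a b : X} {A B : Set X} {ψ : ℝ × ℝ → X} (hψ : IsBox r ψ)
    (hs : Sides {y | r (ψ 0) y} A B) (ha : a ∈ A) (hb : r (ψ 0) b)
    (hA : ψ (0, 1/2) ∈ A) : ∀ᶠ x' in 𝓝 (ψ 0), x' ∈ A → Sp r x' a b := by
  have h0 : (0 : ℝ × ℝ) ∈ Metric.ball (0 : ℝ × ℝ) 1 := by simp
  have hup : ((0, 1/2) : ℝ × ℝ) ∈ Metric.ball (0 : ℝ × ℝ) 1 := by
    rw [mem_ball_iff]; norm_num [abs_lt]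
  have ho : IsOpen (ψ '' {p | p ∈ Metric.ball (0 : ℝ × ℝ) 1 ∧ p.2 < 1/2}) := hψ.lower_open _
  have hnh := ho.mem_nhds (show ψ 0 ∈ ψ '' {p | p ∈ Metric.ball (0 : ℝ × ℝ) 1 ∧ p.2 < 1/2} from
    ⟨0, ⟨h0, by norm_num⟩, rfl⟩)
  filter_upwards [hnh, (hs.con C hA ha).eventually C]
  rintro _ ⟨p, ⟨hp, hp2⟩, rfl⟩ c1 hpA
  have hp0 : (0 : ℝ × ℝ).2 < p.2 := by
    by_contra hle
    rcases lt_or_eq_of_le (not_lt.1 hle) with hlt | heq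
    · rcases C.box_sides hψ h0 hp hup hlt (by norm_num) hs with ⟨_, h⟩ | ⟨h, _⟩
      · exact hs.notAB hA h
      · exact hs.notAB hpA h
    · exact hs.notA hpA ((hψ.iff h0 hp).2 heq.symm)
  have hcon : ∀ A' B', Sides {y | r (ψ p) y} A' B' → ψ 0 ∈ A' → b ∈ A' := by
    intro A' B' hs' h
    refine hs'.subset (C.conn (ψ 0)) ?_ (C.equiv.refl _) h hb
    intro k hk hk'
    exact hs.notA hpA (C.equiv.trans hk (C.equiv.symm hk'))
  obtain ⟨A', B', hs'⟩ := C.sides (ψ p)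
  rcases C.box_sides hψ hp h0 hup hp0 hp2 hs' with ⟨h3, h4⟩ | ⟨h3, h4⟩
  · exact ⟨B', A', hs'.symm, c1.mem hs'.symm h4, hcon _ _ hs' h3⟩
  · exact ⟨A', B', hs', c1.mem hs' h4, hcon _ _ hs'.symm h3⟩

lemma Ctx.near (C : Ctx X r) {z a b : X} {A B : Set X} (hs : Sides {y | r z y} A B)
    (ha : a ∈ A) (hb : r z b) : ∀ᶠ x' in 𝓝 z, x' ∈ A → Sp r x' a b := by
  obtain ⟨ψ, hψ, rfl, -⟩ := C.box z univ univ_mem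
  have h0 : (0 : ℝ × ℝ) ∈ Metric.ball (0 : ℝ × ℝ) 1 := by simp
  have hup : ((0, 1/2) : ℝ × ℝ) ∈ Metric.ball (0 : ℝ × ℝ) 1 := by
    rw [mem_ball_iff]; norm_num [abs_lt]
  have hlo : ((0, -(1/2)) : ℝ × ℝ) ∈ Metric.ball (0 : ℝ × ℝ) 1 := by
    rw [mem_ball_iff]; norm_num [abs_lt]
  rcases C.box_sides hψ h0 hlo hup (by norm_num) (by norm_num) hs with ⟨h1, h2⟩ | ⟨h1, h2⟩
  · have e0 : ψ ((0 : ℝ × ℝ).1, -(0 : ℝ × ℝ).2) = ψ 0 := by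
      congr 1; ext <;> simp
    have := C.near_aux (a := a) (b := b) hψ.flip (A := A) (B := B) (by rw [e0]; exact hs) ha
      (by rw [e0]; exact hb) h1
    rwa [e0] at this
  · exact C.near_aux hψ hs ha hb h2

/-- every leaf in the open strip separates the boundary leaves -/
lemma Ctx.key (C : Ctx X r) {a b p : X} {A₁ B₁ A₃ B₃ : Set X} (h₁ : Sides {y | r a y} A₁ B₁)
    (h₃ : Sides {y | r b y} A₃ B₃) (hb : b ∈ A₁) (ha : a ∈ A₃) (hp₁ : p ∈ A₁) (hp₃ : p ∈ A₃) :
    Sp r p a b := by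
  let N : Set X := {x | ∀ᶠ x' in 𝓝 x, x' ∈ A₃ → Sp r x' a b}
  let N' : Set X := {x | x ∈ A₃ ∧ Con r x a b}
  have hN : IsOpen N := isOpen_setOfPred_eventually_nhds
  have hN' : IsOpen N' := by
    rw [isOpen_iff_mem_nhds]
    rintro x ⟨hx, hc⟩
    filter_upwards [h₃.oA.mem_nhds hx, hc.eventually C] with y h1 h2
    exact ⟨h1, h2⟩
  have hd : Disjoint N N' := by
    rw [Set.disjoint_left]
    rintro x hx ⟨hx3, hc⟩
    obtain ⟨A, B, hs, h1, h2⟩ := hx.self_of_nhds hx3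
    exact hs.notAB (hc.mem hs h1) h2
  have hleaf3 : ∀ z, r b z → z ∈ N := by
    intro z hz
    have hL : {y | r b y} = {y | r z y} := by
      ext y; exact ⟨fun h => C.equiv.trans (C.equiv.symm hz) h, fun h => C.equiv.trans hz h⟩
    rw [hL] at h₃
    exact C.near h₃ ha (C.equiv.symm hz)
  have hcov : A₁ ⊆ N ∪ N' := by
    intro x hx
    by_cases hx3 : x ∈ A₃
    · have hax : a ∉ {y | r x y} := fun h => h₁.notA hx (C.equiv.symm h)
      have hbx : b ∉ {y | r x y} := fun h => h₃.notA hx3 (C.equiv.symm h)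
      obtain ⟨A, B, hs⟩ := C.sides x
      rcases hs.mem_or hax with h1 | h1 <;> rcases hs.mem_or hbx with h2 | h2
      · exact Or.inr ⟨hx3, hs.con C h1 h2⟩
      · exact Or.inl ((Sp.eventually C ⟨A, B, hs, h1, h2⟩).mono fun _ h _ => h)
      · exact Or.inl ((Sp.eventually C ⟨B, A, hs.symm, h1, h2⟩).mono fun _ h _ => h)
      · exact Or.inr ⟨hx3, hs.symm.con C h1 h2⟩
    · left
      by_cases hxL : r b x
      · exact hleaf3 x hxL
      · have hxB := (h₃.mem_or hxL).resolve_left hx3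
        show ∀ᶠ x' in 𝓝 x, x' ∈ A₃ → Sp r x' a b
        filter_upwards [h₃.oB.mem_nhds hxB] with y hy hyA
        exact absurd hy (h₃.notAB hyA)
  have := h₁.cA.subset_left_of_subset_union hN hN' hd hcov ⟨b, hb, hleaf3 b (C.equiv.refl b)⟩
  exact (this hp₁).self_of_nhds hp₃

/-- final topological statement -/
lemma Ctx.final (C : Ctx X r) {a b p : X} (hab : ¬ r a b)
    (hp : p ∈ interior (stripBetween {y | r a y} {y | r b y})) :
    stripBetween {y | r a y} {y | r p y} ∩ stripBetween {y | r p y} {y | r b y} = {y | r p y} ∧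
    stripBetween {y | r a y} {y | r b y} =
      stripBetween {y | r a y} {y | r p y} ∪ stripBetween {y | r p y} {y | r b y} := by
  have hrf := C.equiv.refl
  have mk : ∀ x y, ¬ r x y → ∃ A B, Sides {w | r x w} A B ∧ {w | r y w} ⊆ A := by
    intro x y hxy
    obtain ⟨A, B, hs⟩ := C.sides x
    have hdis : ∀ k ∈ {w | r y w}, k ∉ {w | r x w} := fun k hk hk' =>
      hxy (C.equiv.trans hk' (C.equiv.symm hk))
    rcases hs.mem_or hxy with h | h
    · exact ⟨A, B, hs, hs.subset (C.conn y) hdis (hrf y) h⟩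
    · exact ⟨B, A, hs.symm, hs.symm.subset (C.conn y) hdis (hrf y) h⟩
  have hba : ¬ r b a := fun h => hab (C.equiv.symm h)
  obtain ⟨A₁, B₁, h₁, h₁b⟩ := mk a b hab
  obtain ⟨A₃, B₃, h₃, h₃a⟩ := mk b a hba
  have e13 : stripBetween {y | r a y} {y | r b y} = (A₁ ∪ {y | r a y}) ∩ (A₃ ∪ {y | r b y}) := by
    rw [stripBetween, h₁.halfPlane h₁b ⟨b, hrf b⟩, h₃.halfPlane h₃a ⟨a, hrf a⟩]
  rw [e13, mem_interior_iff_mem_nhds] at hp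
  have hpa : ¬ r a p := by
    intro h
    obtain ⟨w, hw, hwB⟩ := mem_closure_iff_nhds.1 (h₁.LB h) _ hp
    rcases hw.1 with h' | h'
    · exact h₁.notAB h' hwB
    · exact h₁.notB hwB h'
  have hpb : ¬ r b p := by
    intro h
    obtain ⟨w, hw, hwB⟩ := mem_closure_iff_nhds.1 (h₃.LB h) _ hp
    rcases hw.2 with h' | h'
    · exact h₃.notAB h' hwB
    · exact h₃.notB hwB h'
  have hp₁ : p ∈ A₁ := (mem_of_mem_nhds hp).1.resolve_right hpa
  have hp₃ : p ∈ A₃ := (mem_of_mem_nhds hp).2.resolve_right hpb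
  obtain ⟨A₂, B₂, h₂, ha₂, hb₂⟩ := C.key h₁ h₃ (h₁b (hrf b)) (h₃a (hrf a)) hp₁ hp₃
  have dis : ∀ x y, ¬ r x y → ∀ k ∈ {w | r y w}, k ∉ {w | r x w} := fun x y hxy k hk hk' =>
    hxy (C.equiv.trans hk' (C.equiv.symm hk))
  have s21 : {y | r a y} ⊆ A₂ :=
    h₂.subset (C.conn a) (dis _ _ fun h => hpa (C.equiv.symm h)) (hrf a) ha₂
  have s23 : {y | r b y} ⊆ B₂ :=
    h₂.symm.subset (C.conn b) (dis _ _ fun h => hpb (C.equiv.symm h)) (hrf b) hb₂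
  have s12 : {y | r p y} ⊆ A₁ := h₁.subset (C.conn p) (dis _ _ hpa) (hrf p) hp₁
  have s32 : {y | r p y} ⊆ A₃ := h₃.subset (C.conn p) (dis _ _ hpb) (hrf p) hp₃
  have e12 : stripBetween {y | r a y} {y | r p y} = (A₁ ∪ {y | r a y}) ∩ (A₂ ∪ {y | r p y}) := by
    rw [stripBetween, h₁.halfPlane s12 ⟨p, hrf p⟩, h₂.halfPlane s21 ⟨a, hrf a⟩]
  have e23 : stripBetween {y | r p y} {y | r b y} = (B₂ ∪ {y | r p y}) ∩ (A₃ ∪ {y | r b y}) := by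
    rw [stripBetween, h₂.symm.halfPlane s23 ⟨b, hrf b⟩, h₃.halfPlane s32 ⟨p, hrf p⟩]
  have i3 : A₂ ∪ {y | r p y} ⊆ A₃ := by
    rw [← h₂.closure]
    refine h₃.subset h₂.cA.closure ?_ (h₂.LA (hrf p)) hp₃
    rw [h₂.closure]
    rintro k (hk | hk) hk'
    · exact h₂.notAB hk (s23 hk')
    · exact h₃.notA (s32 hk) hk'
  have i1 : B₂ ∪ {y | r p y} ⊆ A₁ := by
    rw [← h₂.symm.closure]
    refine h₁.subset h₂.cB.closure ?_ (h₂.LB (hrf p)) hp₁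
    rw [h₂.symm.closure]
    rintro k (hk | hk) hk'
    · exact h₂.notAB (s21 hk') hk
    · exact h₁.notA (s12 hk) hk'
  rw [e12, e23, e13]
  constructor
  · ext x
    constructor
    · rintro ⟨⟨_, h⟩, ⟨h', _⟩⟩
      rcases h with h | h
      · rcases h' with h' | h'
        · exact absurd h' (h₂.notAB h)
        · exact h'
      · exact h
    · intro h
      exact ⟨⟨Or.inl (s12 h), Or.inr h⟩, ⟨Or.inr h, Or.inl (s32 h)⟩⟩
  · ext x
    constructor
    · rintro ⟨h, h'⟩
      by_cases hx : x ∈ {y | r p y}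
      · exact Or.inl ⟨h, Or.inr hx⟩
      · rcases h₂.mem_or hx with h2 | h2
        · exact Or.inl ⟨h, Or.inl h2⟩
        · exact Or.inr ⟨Or.inl h2, h'⟩
    · rintro (⟨h, h'⟩ | ⟨h, h'⟩)
      · exact ⟨h, Or.inl (i3 h')⟩
      · exact ⟨Or.inl (i1 h), h'⟩

end ctx2

section geometry

variable {S : RiemannianSurface} (F : GeodesicLineFoliation S)

/-- being on the same leaf -/
def Rel (x y : S.M) : Prop := ∃ L ∈ F.leaves, x ∈ L ∧ y ∈ L

lemma rel_equiv : Equivalence (Rel F) := by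
  refine ⟨fun x => ?_, ?_, ?_⟩
  · obtain ⟨L, hL, hx⟩ := F.covers x
    exact ⟨L, hL, hx, hx⟩
  · rintro x y ⟨L, hL, hx, hy⟩
    exact ⟨L, hL, hy, hx⟩
  · rintro x y z ⟨L, hL, hx, hy⟩ ⟨L', hL', hy', hz⟩
    obtain rfl := F.eq_of_inter L hL L' hL' ⟨y, hy, hy'⟩
    exact ⟨L, hL, hx, hz⟩

lemma leaf_eq {L : Set S.M} (hL : L ∈ F.leaves) {x : S.M} (hx : x ∈ L) :
    L = {y | Rel F x y} := by
  ext y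
  constructor
  · intro hy
    exact ⟨L, hL, hx, hy⟩
  · rintro ⟨L', hL', hx', hy⟩
    obtain rfl := F.eq_of_inter L hL L' hL' ⟨x, hx, hx'⟩
    exact hy

lemma isLine_isometry {X : Type} [MetricSpace X] {γ : ℝ → X} (h : IsLine γ) : Isometry γ :=
  Isometry.of_dist_eq fun s t => by rw [h s t, Real.dist_eq]

lemma exists_line (x : S.M) :
    ∃ γ : ℝ → S.M, IsLine γ ∧ Set.range γ = {y | Rel F x y} := by
  obtain ⟨L, hL, hx⟩ := F.covers x
  obtain ⟨γ, h1, -, h2⟩ := F.leaf_is_geodesic_line L hL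
  exact ⟨γ, h1, h2.trans (leaf_eq F hL hx)⟩

lemma exists_line_through {u v : S.M} (h : Rel F u v) :
    ∃ γ : ℝ → S.M, IsLine γ ∧ γ 0 = u ∧ γ (dist u v) = v ∧ ∀ t, Rel F u (γ t) := by
  obtain ⟨γ, h1, h2⟩ := exists_line F u
  have hu : u ∈ Set.range γ := by rw [h2]; exact (rel_equiv F).refl u
  have hv : v ∈ Set.range γ := by rw [h2]; exact h
  have hm : ∀ t, Rel F u (γ t) := fun t => by
    have : γ t ∈ Set.range γ := ⟨t, rfl⟩
    rw [h2] at this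
    exact this
  obtain ⟨a, rfl⟩ := hu
  obtain ⟨b, rfl⟩ := hv
  rw [h1 a b]
  rcases le_total a b with hab | hab
  · refine ⟨fun t => γ (a + t), fun s t => ?_, by simp, ?_, fun t => hm _⟩
    · show dist (γ (a + s)) (γ (a + t)) = _
      rw [h1]; congr 1; ring
    · show γ _ = γ _
      rw [abs_of_nonpos (by linarith)]; congr 1; ring
  · refine ⟨fun t => γ (a - t), fun s t => ?_, by simp, ?_, fun t => hm _⟩
    · show dist (γ (a - s)) (γ (a - t)) = _
      rw [h1, abs_sub_comm]; congr 1; ring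
    · show γ _ = γ _
      rw [abs_of_nonneg (by linarith)]; congr 1; ring

lemma leaf_closed (x : S.M) : IsClosed {y | Rel F x y} := by
  obtain ⟨γ, h1, h2⟩ := exists_line F x
  rw [← h2]
  exact (isLine_isometry h1).isClosedEmbedding.isClosed_range

lemma leaf_conn (x : S.M) : IsPreconnected {y | Rel F x y} := by
  obtain ⟨γ, h1, h2⟩ := exists_line F x
  rw [← h2]
  exact isPreconnected_range (isLine_isometry h1).continuous

lemma plaques_countable {X : Type} [MetricSpace X] {γ : ℝ → X} (hγ : IsLine γ) {U : Set X}
    (φ : ↥U ≃ₜ (ℝ × ℝ)) : {c : ℝ | ∀ t : ℝ, (φ.symm (t, c)).1 ∈ Set.range γ}.Countable := by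
  have hi := isLine_isometry hγ
  refine Set.PairwiseDisjoint.countable_of_nonempty_interior
    (s := fun c => γ ⁻¹' (Set.range fun t => (φ.symm (t, c)).1)) ?_ ?_
  · intro c _ d _ hcd
    refine Set.disjoint_left.2 ?_
    rintro s ⟨t, ht⟩ ⟨t', ht'⟩
    apply hcd
    have h1 : φ.symm (t, c) = φ.symm (t', d) := Subtype.ext (ht.trans ht'.symm)
    have h2 := φ.symm.injective h1
    exact (Prod.ext_iff.1 h2).2
  · intro c hc
    choose g hg using hc
    have hgc : Continuous g := by
      have : Continuous (γ ∘ g) := by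
        have e : γ ∘ g = fun t => (φ.symm (t, c)).1 := funext hg
        rw [e]
        fun_prop
      exact hi.isEmbedding.continuous_iff.2 this
    have hne : g 0 ≠ g 1 := by
      intro h
      have h1 : φ.symm (0, c) = φ.symm (1, c) := Subtype.ext (by rw [← hg, ← hg, h])
      have h2 := φ.symm.injective h1
      have := (Prod.ext_iff.1 h2).1
      norm_num at this
    have hpre : IsPreconnected (Set.range g) := isPreconnected_range hgc
    have hsub : Set.range g ⊆ γ ⁻¹' (Set.range fun t => (φ.symm (t, c)).1) := by
      rintro _ ⟨t, rfl⟩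
      exact ⟨t, (hg t).symm⟩
    rcases lt_or_gt_of_ne hne with h | h
    · have := (hpre.Icc_subset ⟨0, rfl⟩ ⟨1, rfl⟩).trans hsub
      refine Set.Nonempty.mono (interior_mono this) ?_
      rw [interior_Icc]
      exact Set.nonempty_Ioo.2 h
    · have := (hpre.Icc_subset ⟨1, rfl⟩ ⟨0, rfl⟩).trans hsub
      refine Set.Nonempty.mono (interior_mono this) ?_
      rw [interior_Icc]
      exact Set.nonempty_Ioo.2 h

lemma exists_box (x : S.M) (V : Set S.M) (hV : V ∈ 𝓝 x) : ∃ ψ : ℝ × ℝ → S.M,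
    IsBox (Rel F) ψ ∧ ψ 0 = x ∧ ψ '' Metric.closedBall 0 1 ⊆ V := by
  obtain ⟨U, hU, hxU, φ, hφ⟩ := F.locally_trivial x
  obtain ⟨ρ, hρ, hρU⟩ := Metric.isOpen_iff.1 hU x hxU
  set ψ₀ : ℝ × ℝ → S.M := fun p => (φ.symm p).1 with hψ₀
  have hemb : Topology.IsOpenEmbedding ψ₀ :=
    hU.isOpenEmbedding_subtypeVal.comp φ.symm.isOpenEmbedding
  set q₀ := φ ⟨x, hxU⟩ with hq₀
  have hψq : ψ₀ q₀ = x := by simp [hψ₀, hq₀]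
  have hW : ψ₀ ⁻¹' (V ∩ Metric.ball x (ρ / 3)) ∈ 𝓝 q₀ := by
    apply hemb.continuous.continuousAt
    rw [hψq]
    exact inter_mem hV (Metric.ball_mem_nhds _ (by positivity))
  obtain ⟨δ, hδ, hδW⟩ := Metric.nhds_basis_closedBall.mem_iff.1 hW
  have key : ∀ p q, p ∈ Metric.closedBall q₀ δ → q ∈ Metric.closedBall q₀ δ →
      (Rel F (ψ₀ p) (ψ₀ q) ↔ p.2 = q.2) := by
    intro p q hp hq
    constructor
    · intro hr
      obtain ⟨γ, h1, h2⟩ := exists_line F (ψ₀ p)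
      have hpγ : ψ₀ p ∈ Set.range γ := by rw [h2]; exact (rel_equiv F).refl _
      have hqγ : ψ₀ q ∈ Set.range γ := by rw [h2]; exact hr
      obtain ⟨a, ha⟩ := hpγ
      obtain ⟨b, hb⟩ := hqγ
      have hpx : dist (ψ₀ p) x < ρ / 3 := (hδW hp).2
      have hqx : dist (ψ₀ q) x < ρ / 3 := (hδW hq).2
      have hab : |b - a| < 2 * ρ / 3 := by
        have := dist_triangle_right (ψ₀ q) (ψ₀ p) x
        rw [← ha, ← hb, h1] at this
        rw [← ha] at hpx
        rw [← hb] at hqx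
        linarith
      have hin : ∀ s : Set.uIcc a b, γ s ∈ U := by
        intro s
        apply hρU
        have h3 : |(s : ℝ) - a| ≤ |b - a| := Set.abs_sub_left_of_mem_uIcc s.2
        have h4 := dist_triangle (γ s) (γ a) x
        rw [h1] at h4
        rw [← ha] at hpx
        rw [Metric.mem_ball]
        linarith
      let h : Set.uIcc a b → ℝ := fun s => (φ ⟨γ s, hin s⟩).2
      have hc : Continuous h := by
        have := (isLine_isometry h1).continuous
        refine continuous_snd.comp (φ.continuous.comp ?_)
        exact Continuous.subtype_mk (this.comp continuous_subtype_val) _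
      have : PreconnectedSpace (Set.uIcc a b) :=
        Subtype.preconnectedSpace isPreconnected_uIcc
      have hpre := isPreconnected_range hc
      have hsub : Set.range h ⊆ {c : ℝ | ∀ t : ℝ, (φ.symm (t, c)).1 ∈ Set.range γ} := by
        rintro _ ⟨s, rfl⟩ t
        obtain ⟨L, hL, hLt⟩ := hφ (h s)
        have h5 : γ s ∈ L := by
          have := hLt (φ ⟨γ s, hin s⟩).1
          simpa [h] using this
        have h6 : Rel F (ψ₀ p) (γ s) := by
          have : γ s ∈ Set.range γ := ⟨s, rfl⟩
          rwa [h2] at this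
        rw [h2]
        exact (rel_equiv F).trans h6 ⟨L, hL, h5, hLt t⟩
      have hss := (plaques_countable h1 φ).isTotallyDisconnected _ hsub hpre
      have e1 : h ⟨a, Set.left_mem_uIcc⟩ = p.2 := by
        have : (⟨γ a, hin ⟨a, Set.left_mem_uIcc⟩⟩ : U) = φ.symm p := Subtype.ext ha
        simp only [h]
        rw [this, φ.apply_symm_apply]
      have e2 : h ⟨b, Set.right_mem_uIcc⟩ = q.2 := by
        have : (⟨γ b, hin ⟨b, Set.right_mem_uIcc⟩⟩ : U) = φ.symm q := Subtype.ext hb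
        simp only [h]
        rw [this, φ.apply_symm_apply]
      rw [← e1, ← e2]
      exact hss ⟨_, rfl⟩ ⟨_, rfl⟩
    · intro hpq
      obtain ⟨L, hL, hLt⟩ := hφ p.2
      refine ⟨L, hL, hLt p.1, ?_⟩
      have := hLt q.1
      rw [hpq] at this
      exact this
  have hmem : ∀ p ∈ Metric.closedBall (0 : ℝ × ℝ) 1, q₀ + δ • p ∈ Metric.closedBall q₀ δ := by
    intro p hp
    rw [mem_closedBall_zero_iff] at hp
    rw [Metric.mem_closedBall, dist_self_add_left, norm_smul, Real.norm_of_nonneg hδ.le]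
    nlinarith
  refine ⟨fun p => ψ₀ (q₀ + δ • p), ⟨?_, ?_⟩, ?_, ?_⟩
  · exact hemb.comp ((Homeomorph.smulOfNeZero δ hδ.ne').trans
      (Homeomorph.addLeft q₀)).isOpenEmbedding
  · intro p hp q hq
    rw [key _ _ (hmem p hp) (hmem q hq)]
    simp [hδ.ne']
  · simpa using hψq
  · rintro _ ⟨p, hp, rfl⟩
    exact (hδW (hmem p hp)).1

lemma rel_closed : IsClosed {p : S.M × S.M | Rel F p.1 p.2} := by
  have hcomp : CompleteSpace S.M := S.complete
  rw [isClosed_iff_ultrafilter]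
  rintro ⟨x, y⟩ 𝒰 hle hR
  have hR' : ∀ᶠ w in (𝒰 : Filter (S.M × S.M)), Rel F w.1 w.2 := hR
  have hex : ∀ w : S.M × S.M, ∃ γ : ℝ → S.M, Rel F w.1 w.2 → IsLine γ ∧ γ 0 = w.1 ∧
      γ (dist w.1 w.2) = w.2 ∧ ∀ t, Rel F w.1 (γ t) := by
    intro w
    by_cases h : Rel F w.1 w.2
    · obtain ⟨γ, hγ⟩ := exists_line_through F h
      exact ⟨γ, fun _ => hγ⟩
    · exact ⟨fun _ => w.1, fun h' => absurd h' h⟩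
  choose G hG using hex
  have hx : Tendsto (fun w : S.M × S.M => w.1) 𝒰 (𝓝 x) := (continuous_fst.tendsto (x, y)).mono_left hle
  have hy : Tendsto (fun w : S.M × S.M => w.2) 𝒰 (𝓝 y) := (continuous_snd.tendsto (x, y)).mono_left hle
  let Θ : Set ℝ := {t | ∃ z, Rel F x z ∧ Tendsto (fun w => G w t) 𝒰 (𝓝 z)}
  have h0 : (0 : ℝ) ∈ Θ := by
    refine ⟨x, (rel_equiv F).refl x, hx.congr' ?_⟩
    filter_upwards [hR'] with w hw
    exact (hG w hw).2.1.symm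
  have hopen : IsOpen Θ := by
    rw [Metric.isOpen_iff]
    rintro t ⟨z, hxz, htz⟩
    obtain ⟨ψ, hψ, hψ0, -⟩ := exists_box F z univ univ_mem
    have hb0 : (0 : ℝ × ℝ) ∈ Metric.ball (0 : ℝ × ℝ) 1 := by simp
    have hn : ψ '' Metric.ball (0 : ℝ × ℝ) 1 ∈ 𝓝 z := hψ.open_ball.mem_nhds ⟨0, hb0, hψ0⟩
    obtain ⟨ε, hε, hεb⟩ := Metric.mem_nhds_iff.1 hn
    refine ⟨ε / 2, by positivity, ?_⟩
    intro s hs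
    rw [Metric.mem_ball, Real.dist_eq] at hs
    have hnear : ∀ᶠ w in (𝒰 : Filter (S.M × S.M)), dist (G w t) z < ε / 2 :=
      (Metric.tendsto_nhds.1 htz) _ (by positivity)
    have hPQ : ∀ᶠ w in (𝒰 : Filter (S.M × S.M)), ∃ pq : (ℝ × ℝ) × (ℝ × ℝ),
        pq.1 ∈ Metric.ball (0 : ℝ × ℝ) 1 ∧ ψ pq.1 = G w s ∧
        pq.2 ∈ Metric.ball (0 : ℝ × ℝ) 1 ∧ ψ pq.2 = G w t ∧ pq.1.2 = pq.2.2 := by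
      filter_upwards [hR', hnear] with w hw hw2
      obtain ⟨hl, -, -, hrel⟩ := hG w hw
      have h1 : G w t ∈ Metric.ball z ε := by rw [Metric.mem_ball]; linarith
      have h2 : G w s ∈ Metric.ball z ε := by
        rw [Metric.mem_ball]
        have := dist_triangle (G w s) (G w t) z
        rw [hl] at this
        linarith
      obtain ⟨q, hq, hq'⟩ := hεb h1
      obtain ⟨p, hp, hp'⟩ := hεb h2
      refine ⟨(p, q), hp, hp', hq, hq', ?_⟩
      show p.2 = q.2
      rw [← hψ.iff hp hq, hp', hq']
      exact (rel_equiv F).trans ((rel_equiv F).symm (hrel s)) (hrel t)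
    obtain ⟨f, hf⟩ := hPQ.choice
    have hcpt : IsCompact (Metric.closedBall (0 : ℝ × ℝ) 1) := isCompact_closedBall _ _
    obtain ⟨p, hp, hpl⟩ := hcpt.ultrafilter_le_nhds (𝒰.map fun w => (f w).1) (by
      rw [le_principal_iff]
      show ∀ᶠ w in (𝒰 : Filter (S.M × S.M)), (f w).1 ∈ Metric.closedBall (0 : ℝ × ℝ) 1
      filter_upwards [hf] with w hw
      exact Metric.ball_subset_closedBall hw.1)
    have hP : Tendsto (fun w => (f w).1) 𝒰 (𝓝 p) := hpl
    have hQ : Tendsto (fun w => (f w).2) 𝒰 (𝓝 0) := by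
      rw [hψ.1.isInducing.tendsto_nhds_iff, hψ0]
      refine htz.congr' ?_
      filter_upwards [hf] with w hw
      exact hw.2.2.2.1.symm
    have hp2 : p.2 = (0 : ℝ × ℝ).2 := by
      have t1 : Tendsto (fun w => (f w).1.2) 𝒰 (𝓝 p.2) := (continuous_snd.tendsto p).comp hP
      have t2 : Tendsto (fun w => (f w).2.2) 𝒰 (𝓝 (0 : ℝ × ℝ).2) :=
        (continuous_snd.tendsto _).comp hQ
      refine tendsto_nhds_unique t1 (t2.congr' ?_)
      filter_upwards [hf] with w hw
      exact hw.2.2.2.2.symm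
    refine ⟨ψ p, (rel_equiv F).trans hxz ?_, ?_⟩
    · rw [← hψ0, hψ.2 0 (Metric.ball_subset_closedBall hb0) p hp]
      exact hp2.symm
    · refine ((hψ.1.continuous.tendsto p).comp hP).congr' ?_
      filter_upwards [hf] with w hw
      exact hw.2.1
  have hclosed : IsClosed Θ := by
    apply IsSeqClosed.isClosed
    intro t t' ht htt
    choose z hz htz using ht
    have hd : ∀ k l, dist (z k) (z l) = |t k - t l| := by
      intro k l
      refine tendsto_nhds_unique ((htz k).dist (htz l)) (tendsto_const_nhds.congr' ?_)
      filter_upwards [hR'] with w hw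
      exact ((hG w hw).1 _ _).symm
    have hcau : CauchySeq z := by
      have := htt.cauchySeq
      rw [Metric.cauchySeq_iff] at this ⊢
      intro ε hε
      obtain ⟨N, hN⟩ := this ε hε
      refine ⟨N, fun m hm n hn => ?_⟩
      rw [hd, ← Real.dist_eq]
      exact hN m hm n hn
    obtain ⟨z', hz'⟩ := cauchySeq_tendsto_of_complete hcau
    refine ⟨z', (leaf_closed F x).mem_of_tendsto hz' (Eventually.of_forall hz), ?_⟩
    rw [Metric.tendsto_nhds]
    intro ε hε
    have e1 := (Metric.tendsto_nhds.1 hz') (ε / 3) (by positivity)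
    have e2 := (Metric.tendsto_nhds.1 htt) (ε / 3) (by positivity)
    obtain ⟨k, hk1, hk2⟩ := (e1.and e2).exists
    filter_upwards [hR', (Metric.tendsto_nhds.1 (htz k)) (ε / 3) (by positivity)] with w hw hw2
    have e3 : dist (G w t') (G w (t k)) = dist (t k) t' := by
      rw [(hG w hw).1, abs_sub_comm, Real.dist_eq]
    have := dist_triangle4 (G w t') (G w (t k)) (z k) z'
    linarith
  have huniv : Θ = univ := IsClopen.eq_univ ⟨hclosed, hopen⟩ ⟨0, h0⟩
  obtain ⟨z, hxz, hz⟩ : dist x y ∈ Θ := huniv ▸ mem_univ _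
  have hyz : y = z := by
    have hdist : Tendsto (fun w : S.M × S.M => dist (dist w.1 w.2) (dist x y)) 𝒰 (𝓝 0) := by
      have := (hx.dist hy).dist (tendsto_const_nhds (x := dist x y))
      simpa using this
    have h1 : Tendsto (fun w : S.M × S.M => dist w.2 (G w (dist x y))) 𝒰 (𝓝 0) := by
      refine hdist.congr' ?_
      filter_upwards [hR'] with w hw
      obtain ⟨hl, -, hw2, -⟩ := hG w hw
      have h7 := hl (dist w.1 w.2) (dist x y)
      rw [hw2] at h7
      rw [h7, Real.dist_eq]
    exact dist_eq_zero.1 (tendsto_nhds_unique (hy.dist hz) h1)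
  show Rel F x y
  rw [hyz]
  exact hxz

lemma ctx (hplane : Nonempty (S.M ≃ₜ (ℝ × ℝ))) : Ctx S.M (Rel F) :=
  ⟨rel_equiv F, exists_box F, rel_closed F, leaf_conn F, hplane⟩

end geometry

end LeafSep

/-- betweenness lemma. Let `F` be a geodesic line foliation of a
complete Riemannian plane `M`. Let `σ₁` and `σ₃` be two (distinct) leaves of `F`, let
`p` be an interior point of the strip `S_{σ₁}^{σ₃}`, and let `σ₂` be the leaf of `F`
passing through `p`. Then `σ₂` separates the strip:
`S_{σ₁}^{σ₂} ∩ S_{σ₂}^{σ₃} = σ₂` and `S_{σ₁}^{σ₃} = S_{σ₁}^{σ₂} ∪ S_{σ₂}^{σ₃}`. -/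
theorem leaf_separates_strip
    (S : RiemannianSurface)
    (hplane : Nonempty (S.M ≃ₜ (ℝ × ℝ)))
    (F : GeodesicLineFoliation S)
    (σ₁ σ₂ σ₃ : Set S.M)
    (h₁ : σ₁ ∈ F.leaves) (h₃ : σ₃ ∈ F.leaves) (h₁₃ : σ₁ ≠ σ₃)
    (p : S.M) (hp : p ∈ interior (stripBetween σ₁ σ₃))
    (h₂ : σ₂ ∈ F.leaves) (hp₂ : p ∈ σ₂) :
    stripBetween σ₁ σ₂ ∩ stripBetween σ₂ σ₃ = σ₂ ∧
    stripBetween σ₁ σ₃ = stripBetween σ₁ σ₂ ∪ stripBetween σ₂ σ₃ := by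
  have hne : ∀ L ∈ F.leaves, ∃ x, x ∈ L := by
    intro L hL
    obtain ⟨γ, -, -, h⟩ := F.leaf_is_geodesic_line L hL
    exact ⟨γ 0, h ▸ ⟨0, rfl⟩⟩
  obtain ⟨a, ha⟩ := hne σ₁ h₁
  obtain ⟨b, hb⟩ := hne σ₃ h₃
  have e1 := LeafSep.leaf_eq F h₁ ha
  have e2 := LeafSep.leaf_eq F h₂ hp₂
  have e3 := LeafSep.leaf_eq F h₃ hb
  have hab : ¬ LeafSep.Rel F a b := by
    intro h
    apply h₁₃
    refine F.eq_of_inter σ₁ h₁ σ₃ h₃ ⟨b, ?_, hb⟩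
    rw [e1]
    exact h
  rw [e1, e3] at hp ⊢
  rw [e2]
  exact (LeafSep.ctx F hplane).final hab hp
end
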